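/- arXiv:1006.2281 — 12 statements merged into one kernel-verified Lean document; each statement's English description precedes it below -/
import Mathlib

section
/- Let d ≥ 1 and let b, c be real symmetric d×d matrices, regarded as complex matrices via the entrywise coercion ℝ → ℂ. If b is positive semidefinite or c is positive semidefinite, then the complex matrix I_d + i·(b·c) is invertible. Moreover, if b is positive definite, then the complex matrix b + i·c is invertible. -/
open Matrix Complex

open scoped ComplexOrder in
lemma aux_herm {d : ℕ} (H : Matrix (Fin d) (Fin d) ℂ) (hH : H.IsHermitian) :
    IsUnit (1 + Complex.I • H) := by
  have h1 : (1 + Hᴴ * H).PosDef :=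
    Matrix.PosDef.one.add_posSemidef (Matrix.posSemidef_conjTranspose_mul_self H)
  have h2 : (1 - Complex.I • H) * (1 + Complex.I • H) = 1 + Hᴴ * H := by
    rw [hH.eq, sub_mul, mul_add, mul_add, smul_mul_smul_comm, Complex.I_mul_I]
    simp only [one_mul, mul_one, neg_smul, one_smul]
    abel
  have h3 := h1.isUnit
  rw [← h2, Matrix.isUnit_iff_isUnit_det, Matrix.det_mul] at h3
  rw [Matrix.isUnit_iff_isUnit_det]
  exact isUnit_of_mul_isUnit_right h3

lemma aux_symm {d : ℕ} (b : Matrix (Fin d) (Fin d) ℝ) (hb : b.IsSymm) :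
    (b.map Complex.ofReal).IsHermitian := by
  ext i j
  simp [Matrix.conjTranspose_apply, hb.apply]

lemma aux_psd {d : ℕ} (b : Matrix (Fin d) (Fin d) ℝ) (hb : b.PosSemidef) :
    ∃ A : Matrix (Fin d) (Fin d) ℂ, b.map Complex.ofReal = Aᴴ * A := by
  obtain ⟨a, rfl⟩ : ∃ a, b = aᴴ * a := by
    open scoped MatrixOrder in
    exact (CStarAlgebra.nonneg_iff_eq_star_mul_self).1 hb.nonneg
  refine ⟨a.map Complex.ofReal, ?_⟩
  ext i j
  simp [Matrix.mul_apply]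

lemma aux_main {d : ℕ} (b c : Matrix (Fin d) (Fin d) ℝ)
    (hb : b.IsSymm) (hc : c.IsSymm) (h : b.PosSemidef ∨ c.PosSemidef) :
      IsUnit ((1 : Matrix (Fin d) (Fin d) ℂ) +
        Complex.I • (b.map (Complex.ofReal) * c.map (Complex.ofReal))) := by
  rw [Matrix.isUnit_iff_isUnit_det]
  rcases h with h | h
  · obtain ⟨A, hA⟩ := aux_psd b h
    rw [hA, Matrix.mul_assoc, ← Matrix.mul_smul, Matrix.det_one_add_mul_comm, Matrix.smul_mul,
      ← Matrix.isUnit_iff_isUnit_det]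
    exact aux_herm _ (Matrix.isHermitian_mul_mul_conjTranspose A (aux_symm c hc))
  · obtain ⟨A, hA⟩ := aux_psd c h
    rw [hA, ← Matrix.mul_assoc, ← Matrix.smul_mul, Matrix.det_one_add_mul_comm, Matrix.mul_smul,
      ← Matrix.mul_assoc, ← Matrix.isUnit_iff_isUnit_det]
    exact aux_herm _ (Matrix.isHermitian_mul_mul_conjTranspose A (aux_symm b hb))

/-- For real symmetric `d×d` matrices `b, c` (viewed in `ℂ` entrywise):
if `b` or `c` is positive semidefinite then `I + i·(b·c)` is invertible; moreover if `b` is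
positive definite then `b + i·c` is invertible. -/
theorem stmt_0 (d : ℕ) (hd : 1 ≤ d) (b c : Matrix (Fin d) (Fin d) ℝ)
    (hb : b.IsSymm) (hc : c.IsSymm) :
    ((b.PosSemidef ∨ c.PosSemidef) →
      IsUnit ((1 : Matrix (Fin d) (Fin d) ℂ) +
        Complex.I • (b.map (Complex.ofReal) * c.map (Complex.ofReal)))) ∧
    (b.PosDef →
      IsUnit (b.map (Complex.ofReal) + Complex.I • c.map (Complex.ofReal))) := by
  refine ⟨aux_main b c hb hc, fun h => ?_⟩
  have hinv : b * b⁻¹ = 1 :=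
    Matrix.mul_nonsing_inv _ ((Matrix.isUnit_iff_isUnit_det _).1 h.isUnit)
  have hm : b.map Complex.ofReal * (b⁻¹).map Complex.ofReal = 1 := by
    have := congrArg (fun m => m.map Complex.ofRealHom) hinv
    simp only [Matrix.map_mul] at this
    rw [Matrix.map_one _ (map_zero _) (map_one _)] at this
    exact this
  have hs : (b⁻¹).IsSymm := by
    rw [Matrix.IsSymm, Matrix.transpose_nonsing_inv, hb.eq]
  have h1 := aux_main b⁻¹ c hs hc (Or.inl h.inv.posSemidef)
  have h2 : IsUnit (b.map Complex.ofReal) := IsUnit.of_mul_eq_one _ hm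
  have := h2.mul h1
  rwa [mul_add, mul_one, Matrix.mul_smul, ← Matrix.mul_assoc, hm, one_mul] at this
end

section
/- Let q be a real symmetric positive semidefinite d×d matrix of rank r. Then there exist a d×d permutation matrix p, an invertible lower triangular r×r real matrix c_r, and a (d−r)×r real matrix k_r such that p q pᵀ = c cᵀ, where c is the d×d matrix with block form c = [[c_r, 0], [k_r, 0]]. Moreover, the matrix c̃ = [[c_r, 0], [k_r, I_{d−r}]] is invertible and q = (c̃ᵀ p)ᵀ · I_d^r · (c̃ᵀ p), where I_d^r is the d×d diagonal matrix whose first r diagonal entries are 1 and all other entries are 0 (extended Cholesky decomposition). -/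
open Matrix

theorem chol_aux {ι : Type} [Fintype ι] [DecidableEq ι] (n : ℕ) :
    ∀ q : Matrix ι ι ℝ, q.PosSemidef → (Finset.univ.filter (fun i => q i i ≠ 0)).card ≤ n →
    ∃ (r : ℕ) (f : Fin r → ι) (L : Matrix ι (Fin r) ℝ), Function.Injective f ∧ q = L * Lᵀ ∧
      (∀ i j, i < j → L (f i) j = 0) ∧ ∀ i, L (f i) i ≠ 0 := by
  induction n with
  | zero =>
    intro q hq hc
    have h0 : q = 0 := by
      rw [← hq.trace_eq_zero_iff]
      simp only [Nat.le_zero, Finset.card_eq_zero, Finset.filter_eq_empty_iff] at hc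
      exact Finset.sum_eq_zero fun i hi => by simpa using hc hi
    refine ⟨0, Fin.elim0, Matrix.of fun _ j => j.elim0, fun i => i.elim0, ?_, fun i => i.elim0,
      fun i => i.elim0⟩
    ext i j
    simp [h0, Matrix.mul_apply]
  | succ n ih =>
    intro q hq hc
    by_cases hz : ∀ i, q i i = 0
    · apply ih q hq
      simp [hz]
    push Not at hz
    obtain ⟨a, ha⟩ := hz
    have hpos : 0 < q a a := lt_of_le_of_ne hq.diag_nonneg (Ne.symm ha)
    have hsym : ∀ i j, q i j = q j i := fun i j => by
      have := hq.isHermitian.apply i j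
      simpa using this.symm
    set q' : Matrix ι ι ℝ := Matrix.of fun i j => q i j - q i a * q j a / q a a with hq'
    have hps : q'.PosSemidef := by
      refine Matrix.PosSemidef.of_dotProduct_mulVec_nonneg ?_ ?_
      · ext i j
        simp [hq', hsym i j]
        ring
      · intro x
        set s := ∑ i, x i * q i a with hs
        have key := hq.dotProduct_mulVec_nonneg (x - Pi.single a (s / q a a))
        have e1 : star x ⬝ᵥ (q' *ᵥ x) = x ⬝ᵥ (q *ᵥ x) - s * s / q a a := by
          have : q' = q - (q a a)⁻¹ • Matrix.vecMulVec (fun i => q i a) (fun i => q i a) := by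
            ext i j
            simp [hq', Matrix.vecMulVec_apply]
            ring
          rw [this, Matrix.sub_mulVec, dotProduct_sub, Matrix.smul_mulVec, dotProduct_smul,
            Matrix.vecMulVec_mulVec]
          have h2 : (fun i => q i a) ⬝ᵥ x = s := by
            simp [hs, dotProduct, mul_comm]
          rw [h2]
          simp only [star_trivial, smul_eq_mul]
          congr 1
          simp only [dotProduct, Pi.smul_apply, MulOpposite.smul_eq_mul_unop, MulOpposite.unop_op,
            ← mul_assoc, ← Finset.sum_mul]
          rw [← hs]
          ring
        have e2 : x ⬝ᵥ q *ᵥ (Pi.single a (s / q a a)) = s * s / q a a := by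
          simp only [Matrix.mulVec_single, dotProduct, Pi.smul_apply,
            MulOpposite.smul_eq_mul_unop, MulOpposite.unop_op, Matrix.col_apply,
            ← mul_assoc, ← Finset.sum_mul]
          rw [← hs]
          ring
        have e3 : Pi.single a (s / q a a) ⬝ᵥ q *ᵥ x = s * s / q a a := by
          rw [single_dotProduct]
          have : (q *ᵥ x) a = s := by
            simp [hs, Matrix.mulVec, dotProduct, mul_comm, hsym a]
          rw [this]; ring
        have e4 : Pi.single a (s / q a a) ⬝ᵥ q *ᵥ (Pi.single a (s / q a a)) = s * s / q a a := by
          simp [single_dotProduct, Matrix.mulVec_single]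
          field_simp
        rw [e1]
        simp only [star_trivial, Matrix.mulVec_sub, dotProduct_sub, sub_dotProduct, e2, e3, e4]
          at key
        linarith
    have hq'a : q' a a = 0 := by simp [hq', ha]
    have hcard : (Finset.univ.filter (fun i => q' i i ≠ 0)).card ≤ n := by
      have : Finset.univ.filter (fun i => q' i i ≠ 0) ⊂ Finset.univ.filter (fun i => q i i ≠ 0) := by
        rw [Finset.ssubset_iff_of_subset]
        · exact ⟨a, by simp [ha], by simp [hq'a]⟩
        · intro i
          simp only [Finset.mem_filter, Finset.mem_univ, true_and]
          intro h h0
          apply h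
          have h1 : 0 ≤ q' i i := hps.diag_nonneg
          have h2 : q' i i = - (q i a * q i a / q a a) := by simp [hq', h0]
          have h3 : 0 ≤ q i a * q i a / q a a := div_nonneg (mul_self_nonneg _) hpos.le
          linarith
      have := Finset.card_lt_card this
      omega
    obtain ⟨r, f, L, hf, hL, htri, hd⟩ := ih q' hps hcard
    have hLa : ∀ j, L a j = 0 := by
      intro j
      rw [hL, Matrix.mul_apply] at hq'a
      have := (Finset.sum_eq_zero_iff_of_nonneg
        (fun k _ => by simpa using mul_self_nonneg (L a k))).1 hq'a j (Finset.mem_univ _)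
      simpa using this
    have hsq : √(q a a) * √(q a a) = q a a := Real.mul_self_sqrt hpos.le
    have hsp : 0 < √(q a a) := Real.sqrt_pos.2 hpos
    refine ⟨r + 1, Fin.cons a f, Matrix.of fun i => Fin.cons (q i a / √(q a a)) (L i), ?_, ?_, ?_, ?_⟩
    · rw [Fin.cons_injective_iff]
      refine ⟨?_, hf⟩
      rintro ⟨i, hi⟩
      exact hd i (by rw [hi, hLa])
    · ext i j
      have h1 : q' i j = ∑ k, L i k * L j k := by rw [hL, Matrix.mul_apply]; rfl
      rw [Matrix.mul_apply, Fin.sum_univ_succ]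
      simp only [Matrix.transpose_apply, Matrix.of_apply, Fin.cons_zero, Fin.cons_succ]
      rw [← h1, div_mul_div_comm, hsq]
      simp [hq']
    · intro i j hij
      cases j using Fin.cases with
      | zero => exact absurd hij (Fin.not_lt_zero _)
      | succ j =>
        cases i using Fin.cases with
        | zero => simp [hLa]
        | succ i => simpa using htri i j (by simpa using hij)
    · intro i
      cases i using Fin.cases with
      | zero => simp [ha, hsp.ne']
      | succ i => simpa using hd i

theorem perm_conj {d : ℕ} (σ : Equiv.Perm (Fin d)) (q : Matrix (Fin d) (Fin d) ℝ) :
    σ.permMatrix ℝ * q * (σ.permMatrix ℝ)ᵀ = q.submatrix σ σ := by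
  ext i j
  rw [Matrix.mul_apply, Finset.sum_eq_single (σ j)]
  · simp [Matrix.mul_apply, Equiv.Perm.permMatrix, PEquiv.toMatrix_apply]
  · intro b _ hb
    have : σ j ≠ b := fun h => hb h.symm
    simp only [Equiv.Perm.permMatrix, Matrix.transpose_apply, PEquiv.toMatrix_apply,
      Equiv.toPEquiv_apply, Option.mem_def, Option.some.injEq, if_neg this, mul_zero]
  · simp

/-- **extended Cholesky decomposition.**
A real symmetric positive semidefinite `d×d` matrix `q` of rank `r` can be written as
`p q pᵀ = c cᵀ` with `p` a permutation matrix and `c = [[c_r, 0],[k_r, 0]]`, `c_r`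
invertible lower triangular; moreover `c̃ = [[c_r, 0],[k_r, I]]` is invertible and
`q = (c̃ᵀ p)ᵀ · I_d^r · (c̃ᵀ p)`. -/
theorem stmt_1 (d r : ℕ) (q : Matrix (Fin d) (Fin d) ℝ) (hq : q.PosSemidef)
    (hr : q.rank = r) (hrd : r ≤ d) :
    ∃ (σ : Equiv.Perm (Fin d)) (c_r : Matrix (Fin r) (Fin r) ℝ)
      (k_r : Matrix (Fin (d - r)) (Fin r) ℝ),
      IsUnit c_r ∧ (∀ i j : Fin r, i < j → c_r i j = 0) ∧
      (let e : Fin r ⊕ Fin (d - r) ≃ Fin d :=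
        finSumFinEquiv.trans (finCongr (Nat.add_sub_cancel' hrd));
       let p : Matrix (Fin d) (Fin d) ℝ := σ.permMatrix ℝ;
       let c : Matrix (Fin d) (Fin d) ℝ :=
         Matrix.reindex e e (Matrix.fromBlocks c_r 0 k_r 0);
       let ctilde : Matrix (Fin d) (Fin d) ℝ :=
         Matrix.reindex e e (Matrix.fromBlocks c_r 0 k_r 1);
       let Idr : Matrix (Fin d) (Fin d) ℝ :=
         Matrix.of fun i j => if i = j ∧ (i : ℕ) < r then (1 : ℝ) else 0;
       p * q * pᵀ = c * cᵀ ∧ IsUnit ctilde ∧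
         q = (ctildeᵀ * p)ᵀ * Idr * (ctildeᵀ * p)) := by
  obtain ⟨r', f, L, hf, hL, htri, hd⟩ := chol_aux _ q hq le_rfl
  have hTu : IsUnit (L.submatrix f id) := by
    rw [Matrix.isUnit_iff_isUnit_det,
      Matrix.det_of_lowerTriangular (L.submatrix f id) (fun i j h => htri i j h)]
    simpa [Finset.prod_eq_zero_iff] using hd
  have hrr : r' = r := by
    rw [← hr, hL, Matrix.rank_self_mul_transpose]
    apply le_antisymm
    · have h1 := Matrix.rank_of_isUnit _ hTu
      rw [Fintype.card_fin] at h1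
      refine h1.symm.le.trans ?_
      have h2 : L.submatrix f id = (1 : Matrix (Fin d) (Fin d) ℝ).submatrix f id * L := by
        ext i j
        simp [Matrix.mul_apply, Matrix.one_apply]
      conv_lhs => rw [h2]
      exact Matrix.rank_mul_le_right _ _
    · simpa using Matrix.rank_le_card_width L
  subst hrr
  clear hr
  set e : Fin r' ⊕ Fin (d - r') ≃ Fin d :=
    finSumFinEquiv.trans (finCongr (Nat.add_sub_cancel' hrd)) with he
  obtain ⟨g, hg⟩ : ∃ g : Fin r' ⊕ Fin (d - r') ≃ Fin d, ∀ i, g (Sum.inl i) = f i := by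
    obtain ⟨g, hg⟩ := Finset.exists_equiv_extend_of_card_eq (α := Fin r' ⊕ Fin (d - r'))
      (t := (Finset.univ : Finset (Fin d)))
      (by rw [Fintype.card_congr e]; simp) (s := Finset.univ.image Sum.inl)
      (f := Sum.elim f (fun j => e (Sum.inr j))) (Finset.subset_univ _) (by
        intro x hx y hy hxy
        simp at hx hy
        obtain ⟨i, rfl⟩ := hx
        obtain ⟨j, rfl⟩ := hy
        simp at hxy
        rw [hf hxy])
    refine ⟨g.trans (Equiv.subtypeUnivEquiv (fun x => Finset.mem_univ x)), fun i => ?_⟩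
    simpa using hg (Sum.inl i) (by simp)
  refine ⟨e.symm.trans g, L.submatrix f id, L.submatrix (fun j => g (Sum.inr j)) id, hTu,
    fun i j h => htri i j h, ?_⟩
  intro e' p c ctilde Idr
  have hpq : p * q * pᵀ = q.submatrix (e.symm.trans g) (e.symm.trans g) := perm_conj _ _
  have hp : pᵀ * p = 1 := by
    rw [mul_eq_one_comm]
    have h := perm_conj (e.symm.trans g) 1
    rwa [Matrix.mul_one, Matrix.submatrix_one_equiv] at h
  have hc : p * q * pᵀ = c * cᵀ := by
    rw [hpq]
    ext i j
    obtain ⟨x, rfl⟩ := e.surjective i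
    obtain ⟨y, rfl⟩ := e.surjective j
    rw [hL, Matrix.mul_apply, ← Equiv.sum_comp e]
    simp only [c, e', Fintype.sum_sum_type]
    rcases x with x | x <;> rcases y with y | y <;> simp [hg, Matrix.mul_apply]
  have hI : Idr = Matrix.reindex e e (Matrix.fromBlocks 1 0 0 0) := by
    ext i j
    obtain ⟨x, rfl⟩ := e.surjective i
    obtain ⟨y, rfl⟩ := e.surjective j
    simp only [Idr, Matrix.of_apply, EmbeddingLike.apply_eq_iff_eq]
    rcases x with x | x <;> rcases y with y | y <;> simp [Matrix.one_apply, he]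
  have hcI : ctilde * Idr * ctildeᵀ = c * cᵀ := by
    rw [hI]
    simp only [ctilde, c, e', Matrix.reindex_apply, Matrix.transpose_submatrix,
      Matrix.submatrix_mul_equiv, Matrix.fromBlocks_transpose, Matrix.fromBlocks_multiply]
    simp
  refine ⟨hc, ?_, ?_⟩
  · rw [Matrix.isUnit_iff_isUnit_det] at hTu ⊢
    simp only [ctilde, Matrix.det_reindex_self, Matrix.det_fromBlocks_zero₁₂]
    simpa using hTu
  · calc q = (pᵀ * p) * q * (pᵀ * p) := by rw [hp]; simp
      _ = pᵀ * (p * q * pᵀ) * p := by simp only [Matrix.mul_assoc]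
      _ = pᵀ * (ctilde * Idr * ctildeᵀ) * p := by rw [hc, hcI]
      _ = _ := by simp only [Matrix.transpose_mul, Matrix.transpose_transpose, Matrix.mul_assoc]
end

section
/- Let ᾱ be a real symmetric positive semidefinite d×d matrix, let a be a real d×d matrix, and let n = rank(aᵀ a). Then there exist a diagonal d×d matrix δ with nonnegative diagonal entries and an invertible d×d real matrix u such that ᾱ = uᵀ δ u and aᵀ a = uᵀ I_d^n u. -/
open Matrix

lemma aux_spec {d : ℕ} (M : Matrix (Fin d) (Fin d) ℝ) (hM : M.IsHermitian) :
    ∃ (l : Fin d → ℝ) (q : Matrix (Fin d) (Fin d) ℝ), qᵀ * q = 1 ∧ q * qᵀ = 1 ∧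
      M = qᵀ * diagonal l * q := by
  refine ⟨hM.eigenvalues, (hM.eigenvectorUnitary : Matrix (Fin d) (Fin d) ℝ)ᵀ, ?_, ?_, ?_⟩
  · have := Unitary.mul_star_self_of_mem hM.eigenvectorUnitary.2
    simpa [star_eq_conjTranspose] using this
  · have := Unitary.star_mul_self_of_mem hM.eigenvectorUnitary.2
    simpa [star_eq_conjTranspose] using this
  · have := hM.spectral_theorem
    rw [Unitary.conjStarAlgAut_apply] at this
    simpa [star_eq_conjTranspose, Function.comp_def] using this

lemma aux_scale {d : ℕ} (y : Fin d → ℝ) (hy : ∀ i, 0 ≤ y i) :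
    ∃ s : Fin d → ℝ, (∀ i, 0 < s i) ∧
      (diagonal y = diagonal s * diagonal (fun i => if y i = 0 then (0:ℝ) else 1) * diagonal s) ∧
      ∀ x : Fin d → ℝ, diagonal x = diagonal s * diagonal (fun i => x i / (s i)^2) * diagonal s := by
  have hs : ∀ i, 0 < (if y i = 0 then (1:ℝ) else √(y i)) := by
    intro i
    split_ifs with h
    · norm_num
    · exact Real.sqrt_pos.2 (lt_of_le_of_ne (hy i) (Ne.symm h))
  refine ⟨fun i => if y i = 0 then 1 else √(y i), hs, ?_, ?_⟩
  · simp only [diagonal_mul_diagonal]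
    congr 1; funext i
    split_ifs with h
    · simp [h]
    · simp [Real.mul_self_sqrt (hy i)]
  · intro x
    simp only [diagonal_mul_diagonal]
    congr 1; funext i
    have := (hs i).ne'
    field_simp

lemma aux_unit_diag {d : ℕ} (s : Fin d → ℝ) (hs : ∀ i, 0 < s i) : IsUnit (diagonal s) := by
  rw [isUnit_iff_isUnit_det, det_diagonal]
  exact (Finset.prod_pos fun i _ => hs i).ne'.isUnit

lemma aux_zero {d : ℕ} (M : Matrix (Fin d) (Fin d) ℝ) (hM : M.PosSemidef) (i : Fin d)
    (h : M i i = 0) (j : Fin d) : M i j = 0 := by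
  obtain ⟨C, hC⟩ : ∃ C : Matrix (Fin d) (Fin d) ℝ, M = Cᵀ * C := by
    obtain ⟨l, q, h1, h2, h3⟩ := aux_spec M hM.1
    have h4 : (diagonal l).PosSemidef := by
      have := hM.conjTranspose_mul_mul_same qᵀ
      rw [h3] at this
      have e : (qᵀ)ᴴ * (qᵀ * diagonal l * q) * qᵀ = (q * qᵀ) * diagonal l * (q * qᵀ) := by
        simp [Matrix.mul_assoc]
      rw [e, h2] at this
      simpa using this
    have hl : ∀ i, 0 ≤ l i := by simpa [Pi.le_def] using (posSemidef_diagonal_iff.1 h4)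
    refine ⟨diagonal (fun i => √(l i)) * q, ?_⟩
    rw [h3, transpose_mul, diagonal_transpose, Matrix.mul_assoc qᵀ, Matrix.mul_assoc qᵀ,
      ← Matrix.mul_assoc (diagonal _) (diagonal _), diagonal_mul_diagonal]
    simp [Real.mul_self_sqrt, hl]
  rw [hC] at h ⊢
  simp only [mul_apply, transpose_apply] at h ⊢
  have := (Finset.sum_eq_zero_iff_of_nonneg (fun k _ => mul_self_nonneg (C k i))).1 h
  refine Finset.sum_eq_zero fun k hk => ?_
  have := mul_self_eq_zero.1 (this k hk)
  simp [this]

/-- Simultaneous diagonalization in the normalized case. -/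
lemma aux_norm {d : ℕ} (A : Matrix (Fin d) (Fin d) ℝ) (hA : A.PosSemidef) (e : Fin d → ℝ)
    (he : ∀ i, e i = 0 ∨ e i = 1) (hB : (diagonal e - A).PosSemidef) :
    ∃ (x y : Fin d → ℝ) (q : Matrix (Fin d) (Fin d) ℝ), qᵀ * q = 1 ∧ q * qᵀ = 1 ∧
      A = qᵀ * diagonal x * q ∧ diagonal e = qᵀ * diagonal y * q := by
  have hrow : ∀ i, e i = 0 → ∀ j, A i j = 0 := by
    intro i hi
    apply aux_zero A hA
    have h1 := hA.diag_nonneg (i := i)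
    have h2 := hB.diag_nonneg (i := i)
    simp [hi] at h2
    linarith
  have hDA : diagonal e * A = A := by
    ext i j
    rw [diagonal_mul]
    rcases he i with h | h
    · simp [h, hrow i h j]
    · simp [h]
  have hDD : diagonal e * diagonal e = diagonal e := by
    rw [diagonal_mul_diagonal]
    congr 1; funext i
    rcases he i with h | h <;> simp [h]
  have hM : (A - (1 - diagonal e)).IsHermitian :=
    hA.1.sub (isHermitian_one.sub (isHermitian_diagonal e))
  obtain ⟨l, q, h1, h2, h3⟩ := aux_spec _ hM
  set D := q * diagonal e * qᵀ with hD
  set A' := q * A * qᵀ with hA'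
  have key : ∀ X Y : Matrix (Fin d) (Fin d) ℝ,
      (q * X * qᵀ) * (q * Y * qᵀ) = q * (X * Y) * qᵀ := by
    intro X Y
    calc _ = q * X * (qᵀ * q) * Y * qᵀ := by simp only [Matrix.mul_assoc]
      _ = _ := by rw [h1]; simp only [Matrix.mul_assoc, Matrix.mul_one, Matrix.one_mul]
  have hL : diagonal l = A' - (1 - D) := by
    have : q * (A - (1 - diagonal e)) * qᵀ = diagonal l := by
      rw [h3]
      calc _ = (q * qᵀ) * diagonal l * (q * qᵀ) := by simp only [Matrix.mul_assoc]
        _ = _ := by rw [h2]; simp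
    rw [← this, hD, hA']
    simp only [Matrix.mul_sub, Matrix.sub_mul, Matrix.mul_one, h2]
  have hDA' : D * A' = A' := by rw [hD, hA', key, hDA]
  have hDD' : D * D = D := by rw [hD, key, hDD]
  have hDt : Dᵀ = D := by simp [hD, Matrix.mul_assoc]
  have hA'psd : A'.PosSemidef := by
    have := hA.mul_mul_conjTranspose_same q
    simpa [hA'] using this
  have hDL : D * diagonal l = A' := by
    rw [hL]; simp only [Matrix.mul_sub, Matrix.mul_one, hDA', hDD']; simp
  have hent : ∀ i j, (1 - D) i j * (l j + 1) = 0 := by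
    intro i j
    have : (1 - D) * diagonal l = -(1 - D) := by
      rw [Matrix.sub_mul, hDL, hL]; simp
    have := congrFun (congrFun this i) j
    rw [mul_diagonal, neg_apply] at this
    linarith
  have hdiag : ∀ i j, i ≠ j → D i j = 0 := by
    intro i j hij
    rcases mul_eq_zero.1 (hent i j) with h | h
    · simpa [Matrix.sub_apply, Matrix.one_apply, hij] using h
    · have hl : l j = -1 := by linarith
      have ha : A' j j = - D j j := by
        rw [← hDL, mul_diagonal, hl]; ring
      have hp := hA'psd.diag_nonneg (i := j)
      have hs : D j j = ∑ k, D k j * D k j := by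
        conv_lhs => rw [← hDD', mul_apply]
        refine Finset.sum_congr rfl fun k _ => ?_
        conv_lhs => rw [← hDt]
        rw [transpose_apply, hDt]
      have hnn : 0 ≤ ∑ k, D k j * D k j := Finset.sum_nonneg fun k _ => mul_self_nonneg _
      have h0 : ∑ k, D k j * D k j = 0 := by linarith
      exact mul_self_eq_zero.1
        ((Finset.sum_eq_zero_iff_of_nonneg (fun k _ => mul_self_nonneg (D k j))).1 h0 i
          (Finset.mem_univ _))
  have hDd : D = diagonal (fun i => D i i) := by
    ext i j
    by_cases hij : i = j
    · subst hij; simp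
    · rw [hdiag i j hij, diagonal_apply_ne _ hij]
  have back : ∀ X : Matrix (Fin d) (Fin d) ℝ, X = qᵀ * (q * X * qᵀ) * q := by
    intro X
    calc X = (qᵀ * q) * X * (qᵀ * q) := by rw [h1]; simp
      _ = _ := by simp only [Matrix.mul_assoc]
  refine ⟨fun i => D i i * l i, fun i => D i i, q, h1, h2, ?_, ?_⟩
  · rw [← diagonal_mul_diagonal, ← hDd, hDL]; exact back A
  · rw [← hDd]; exact back _

lemma aux_nonneg {d : ℕ} (A v : Matrix (Fin d) (Fin d) ℝ) (hA : A.PosSemidef) (hv : IsUnit v)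
    (x : Fin d → ℝ) (h : A = vᵀ * diagonal x * v) : ∀ i, 0 ≤ x i := by
  have : (diagonal x).PosSemidef := by
    rw [h] at hA
    have := (Matrix.IsUnit.posSemidef_star_left_conjugate_iff (x := diagonal x) hv).1
      (by simpa [star_eq_conjTranspose] using hA)
    exact this
  simpa [Pi.le_def] using (posSemidef_diagonal_iff.1 this)

lemma aux_simul {d : ℕ} (A B : Matrix (Fin d) (Fin d) ℝ) (hA : A.PosSemidef)
    (hB : B.PosSemidef) :
    ∃ (x y : Fin d → ℝ) (w : Matrix (Fin d) (Fin d) ℝ), IsUnit w ∧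
      A = wᵀ * diagonal x * w ∧ B = wᵀ * diagonal y * w := by
  obtain ⟨l, q, h1, h2, h3⟩ := aux_spec _ (hA.add hB).1
  have hq : IsUnit q := ⟨⟨q, qᵀ, h2, h1⟩, rfl⟩
  have hl := aux_nonneg _ q (hA.add hB) hq l h3
  obtain ⟨s, hs, hs1, -⟩ := aux_scale l hl
  set e : Fin d → ℝ := fun i => if l i = 0 then (0:ℝ) else 1 with he
  obtain ⟨v, hv⟩ : IsUnit (diagonal s * q) := (aux_unit_diag s hs).mul hq
  set V : Matrix (Fin d) (Fin d) ℝ := (v : Matrix (Fin d) (Fin d) ℝ) with hV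
  set W : Matrix (Fin d) (Fin d) ℝ := ((v⁻¹ : (Matrix (Fin d) (Fin d) ℝ)ˣ) : Matrix (Fin d) (Fin d) ℝ) with hW
  have hVW : V * W = 1 := v.mul_inv
  have hWV : W * V = 1 := v.inv_mul
  have hVWt : Wᵀ * Vᵀ = 1 := by rw [← transpose_mul, hVW, transpose_one]
  have hWVt : Vᵀ * Wᵀ = 1 := by rw [← transpose_mul, hWV, transpose_one]
  have hS : A + B = Vᵀ * diagonal e * V := by
    rw [h3, hs1, hv, transpose_mul, diagonal_transpose]
    simp only [Matrix.mul_assoc]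
  have hSe : Wᵀ * (A + B) * W = diagonal e := by
    rw [hS]
    calc _ = (Wᵀ * Vᵀ) * diagonal e * (V * W) := by simp only [Matrix.mul_assoc]
      _ = _ := by rw [hVW, hVWt]; simp
  have hA' : (Wᵀ * A * W).PosSemidef := by simpa using hA.conjTranspose_mul_mul_same W
  have hB' : (Wᵀ * B * W).PosSemidef := by simpa using hB.conjTranspose_mul_mul_same W
  have hBe : diagonal e - Wᵀ * A * W = Wᵀ * B * W := by
    rw [← hSe, Matrix.mul_add, Matrix.add_mul]; simp
  obtain ⟨x, y, r, r1, r2, r3, r4⟩ := aux_norm (Wᵀ * A * W) hA' e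
    (by intro i; simp only [he]; split_ifs <;> simp) (by rw [hBe]; exact hB')
  have hr : IsUnit r := ⟨⟨r, rᵀ, r2, r1⟩, rfl⟩
  have back : ∀ X : Matrix (Fin d) (Fin d) ℝ, X = Vᵀ * (Wᵀ * X * W) * V := by
    intro X
    calc X = (Vᵀ * Wᵀ) * X * (W * V) := by rw [hWV, hWVt]; simp
      _ = _ := by simp only [Matrix.mul_assoc]
  refine ⟨x, fun i => y i - x i, r * V, hr.mul v.isUnit, ?_, ?_⟩
  · rw [back A, r3, transpose_mul]; simp only [Matrix.mul_assoc]
  · rw [back B, ← hBe, r3, r4, transpose_mul, ← diagonal_sub]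
    simp only [Matrix.mul_assoc, Matrix.mul_sub, Matrix.sub_mul]

/-- For `ᾱ` symmetric positive semidefinite and `a` an arbitrary real `d×d`
matrix with `n = rank(aᵀa)`, there exist a diagonal matrix `δ` with nonnegative entries and an
invertible `u` with `ᾱ = uᵀ δ u` and `aᵀ a = uᵀ I_d^n u`. -/
theorem stmt_3 (d : ℕ) (α a : Matrix (Fin d) (Fin d) ℝ) (hα : α.PosSemidef)
    (n : ℕ) (hn : (aᵀ * a).rank = n) :
    ∃ (dvec : Fin d → ℝ) (u : Matrix (Fin d) (Fin d) ℝ),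
      (∀ i, 0 ≤ dvec i) ∧ IsUnit u ∧
      α = uᵀ * Matrix.diagonal dvec * u ∧
      aᵀ * a = uᵀ * (Matrix.of fun i j : Fin d => if i = j ∧ (i : ℕ) < n then (1 : ℝ) else 0) * u := by
  have hB : (aᵀ * a).PosSemidef := by simpa using posSemidef_conjTranspose_mul_self a
  obtain ⟨x, y, w, hw, hx, hy⟩ := aux_simul α (aᵀ * a) hα hB
  have hx0 := aux_nonneg _ w hα hw x hx
  have hy0 := aux_nonneg _ w hB hw y hy
  obtain ⟨s, hs, hs1, hs2⟩ := aux_scale y hy0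
  have hrank : Fintype.card {i // y i ≠ 0} = n := by
    rw [← hn, hy, rank_mul_eq_left_of_isUnit_det _ _ ((isUnit_iff_isUnit_det _).1 hw),
      rank_mul_eq_right_of_isUnit_det _ _
        ((isUnit_iff_isUnit_det _).1 ((isUnit_transpose w).2 hw)), rank_diagonal]
  have hnd : n ≤ d := by
    rw [← hrank]; simpa using Fintype.card_subtype_le (fun i => y i ≠ 0)
  have hcard : Fintype.card {i : Fin d // (i : ℕ) < n} = Fintype.card {i // y i ≠ 0} := by
    rw [hrank]
    have := Fintype.card_congr (Fin.castLEquiv hnd)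
    simpa using this.symm
  have σ0 := Fintype.equivOfCardEq hcard
  let σ : Equiv.Perm (Fin d) := σ0.extendSubtype
  have hσ : ∀ i : Fin d, y (σ i) = 0 ↔ ¬ ((i : ℕ) < n) := by
    intro i
    constructor
    · intro h hi
      exact σ0.extendSubtype_mem i hi h
    · intro hi
      have := σ0.extendSubtype_not_mem i hi
      simpa using this
  have hperm : ∀ z : Fin d → ℝ, ∀ m : Matrix (Fin d) (Fin d) ℝ,
      mᵀ * diagonal z * m = (m.submatrix σ id)ᵀ * diagonal (z ∘ σ) * (m.submatrix σ id) := by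
    intro z m
    ext i j
    rw [mul_apply, mul_apply]
    simp only [mul_diagonal, transpose_apply, submatrix_apply, id, Function.comp]
    exact (Equiv.sum_comp σ (fun k => m k i * z k * m k j)).symm
  have hm : IsUnit (diagonal s * w) := (aux_unit_diag s hs).mul hw
  refine ⟨(fun i => x i / s i ^ 2) ∘ σ, (diagonal s * w).submatrix σ id, ?_, ?_, ?_, ?_⟩
  · intro i
    exact div_nonneg (hx0 _) (sq_nonneg _)
  · rw [isUnit_iff_isUnit_det] at hm ⊢
    rw [det_permute]
    refine IsUnit.mul ?_ hm
    rcases Int.units_eq_one_or (Equiv.Perm.sign σ) with h | h <;> simp [h]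
  · rw [← hperm, hx, hs2 x, transpose_mul, diagonal_transpose]
    simp only [Matrix.mul_assoc]
  · have : (Matrix.of fun i j : Fin d => if i = j ∧ (i : ℕ) < n then (1 : ℝ) else 0)
        = diagonal ((fun i => if y i = 0 then (0:ℝ) else 1) ∘ σ) := by
      ext i j
      by_cases hij : i = j
      · subst hij
        by_cases hi : (i : ℕ) < n <;> simp [hσ, hi]
      · simp [hij]
    rw [this, ← hperm, hy, hs1, transpose_mul, diagonal_transpose]
    simp only [Matrix.mul_assoc]
end

section
/- Fix d ≥ 2 and α ∈ ℝ. For a smooth function f : ℝ^S → ℝ, where S = {{i,j} : 1 ≤ i ≤ j ≤ d} indexes the coordinates x_{{i,j}} of a symmetric d×d matrix (with the convention x_{{i,j}} = x_{{j,i}}), and for i ∈ {1,…,d}, define the second-order differential operator L_i by L_i f(x) = α ∂_{{i,i}} f(x) + 2 x_{{i,i}} ∂²_{{i,i}} f(x) + 2 Σ_{m≠i} x_{{i,m}} ∂_{{i,m}} ∂_{{i,i}} f(x) + (1/2) Σ_{m≠i, l≠i} x_{{m,l}} ∂_{{i,m}} ∂_{{i,l}} f(x), where ∂_{{i,j}}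 denotes partial differentiation with respect to the coordinate x_{{i,j}}. Then the operators commute: for every C^∞ function f : ℝ^S → ℝ and all i, j ∈ {1,…,d}, L_i (L_j f) = L_j (L_i f). -/
open Sym2

/-- Partial derivative of `f : ℝ^S → ℝ` with respect to the coordinate indexed by
`s ∈ S = Sym2 (Fin d)` (the unordered pairs `{i,j}` indexing the entries of a symmetric
matrix). -/
noncomputable def pderiv {d : ℕ} (s : Sym2 (Fin d))
    (f : (Sym2 (Fin d) → ℝ) → ℝ) (x : Sym2 (Fin d) → ℝ) : ℝ :=
  fderiv ℝ f x (Pi.single s 1)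

/-- The operator
`L_i f(x) = α ∂_{{i,i}} f + 2 x_{{i,i}} ∂²_{{i,i}} f + 2 Σ_{m≠i} x_{{i,m}} ∂_{{i,m}}∂_{{i,i}} f
  + (1/2) Σ_{m≠i, l≠i} x_{{m,l}} ∂_{{i,m}}∂_{{i,l}} f`. -/
noncomputable def Lop {d : ℕ} (α : ℝ) (i : Fin d)
    (f : (Sym2 (Fin d) → ℝ) → ℝ) : (Sym2 (Fin d) → ℝ) → ℝ :=
  fun x =>
    α * pderiv s(i, i) f x
    + 2 * x s(i, i) * pderiv s(i, i) (pderiv s(i, i) f) x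
    + 2 * ∑ m ∈ Finset.univ.filter (fun m => m ≠ i),
        x s(i, m) * pderiv s(i, m) (pderiv s(i, i) f) x
    + (1 / 2) * ∑ m ∈ Finset.univ.filter (fun m => m ≠ i),
        ∑ l ∈ Finset.univ.filter (fun l => l ≠ i),
          x s(m, l) * pderiv s(i, m) (pderiv s(i, l) f) x

abbrev Sm {d : ℕ} (f : (Sym2 (Fin d) → ℝ) → ℝ) : Prop := ContDiff ℝ (⊤ : ℕ∞) f

lemma Sm.diff {d : ℕ} {f : (Sym2 (Fin d) → ℝ) → ℝ} (hf : Sm f) : Differentiable ℝ f :=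
  ContDiff.differentiable hf (by simp)

lemma Sm.pderiv {d : ℕ} {f : (Sym2 (Fin d) → ℝ) → ℝ} (hf : Sm f) (s : Sym2 (Fin d)) :
    Sm (pderiv s f) := by
  have h : ContDiff ℝ (⊤ : ℕ∞) (fderiv ℝ f) := ContDiff.fderiv_right hf (by simp)
  exact h.clm_apply contDiff_const

lemma pderiv_comm {d : ℕ} {f : (Sym2 (Fin d) → ℝ) → ℝ} (hf : Sm f) (s t : Sym2 (Fin d)) :
    pderiv s (pderiv t f) = pderiv t (pderiv s f) := by
  have h : ContDiff ℝ (⊤ : ℕ∞) (fderiv ℝ f) := ContDiff.fderiv_right hf (by simp)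
  have h' : Differentiable ℝ (fderiv ℝ f) := h.differentiable (by simp)
  have key : ∀ (s t : Sym2 (Fin d)) x, pderiv s (pderiv t f) x
      = fderiv ℝ (fderiv ℝ f) x (Pi.single s 1) (Pi.single t 1) := by
    intro s t x
    unfold _root_.pderiv
    rw [fderiv_clm_apply (h' x) (by fun_prop)]
    simp
  funext x
  rw [key, key]
  have hs : IsSymmSndFDerivAt ℝ f x := by
    apply ContDiffAt.isSymmSndFDerivAt (n := (⊤ : ℕ∞)) hf.contDiffAt
    rw [minSmoothness_of_isRCLikeNormedField]
    exact WithTop.coe_le_coe.2 (le_top : (2 : ℕ∞) ≤ ⊤)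
  exact hs _ _

/-- weighted derivative -/
noncomputable def DD {d : ℕ} (a b : Fin d) (f : (Sym2 (Fin d) → ℝ) → ℝ) :
    (Sym2 (Fin d) → ℝ) → ℝ :=
  fun x => (if a = b then 2 else 1) * pderiv s(a, b) f x

lemma Sm.DD {d : ℕ} {f : (Sym2 (Fin d) → ℝ) → ℝ} (hf : Sm f) (a b : Fin d) :
    Sm (DD a b f) := contDiff_const.mul (hf.pderiv _)

lemma pderiv_cmul {d : ℕ} {f : (Sym2 (Fin d) → ℝ) → ℝ} (hf : Sm f) (c : ℝ) (s : Sym2 (Fin d)) :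
    pderiv s (fun x => c * f x) = fun x => c * pderiv s f x := by
  funext x
  unfold pderiv
  rw [fderiv_const_mul (hf.diff x)]
  simp

lemma DD_comm {d : ℕ} {f : (Sym2 (Fin d) → ℝ) → ℝ} (hf : Sm f) (a b p q : Fin d) :
    DD a b (DD p q f) = DD p q (DD a b f) := by
  unfold DD
  rw [pderiv_cmul (hf.pderiv _), pderiv_cmul (hf.pderiv _), pderiv_comm hf]
  funext x
  ring

lemma DD_symm {d : ℕ} (f : (Sym2 (Fin d) → ℝ) → ℝ) (a b : Fin d) :
    DD a b f = DD b a f := by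
  unfold DD
  rw [Sym2.eq_swap]
  simp only [eq_comm]

noncomputable def MM {d : ℕ} (α : ℝ) (i : Fin d) (f : (Sym2 (Fin d) → ℝ) → ℝ) :
    (Sym2 (Fin d) → ℝ) → ℝ :=
  fun x => α * DD i i f x + ∑ m, ∑ l, x s(m, l) * DD i m (DD i l f) x

lemma Sm.MM {d : ℕ} {f : (Sym2 (Fin d) → ℝ) → ℝ} (hf : Sm f) (α : ℝ) (i : Fin d) :
    Sm (MM α i f) := by
  refine (contDiff_const.mul (hf.DD _ _)).add ?_
  refine ContDiff.sum fun m _ => ContDiff.sum fun l _ => ?_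
  exact (contDiff_apply ℝ ℝ _).mul ((hf.DD _ _).DD _ _)

lemma Lop_eq {d : ℕ} {f : (Sym2 (Fin d) → ℝ) → ℝ} (hf : Sm f) (α : ℝ) (i : Fin d) :
    Lop α i f = fun x => (1 / 2) * MM α i f x := by
  funext x
  have hD : ∀ m l, DD i m (DD i l f) x = (if i = m then 2 else 1) * ((if i = l then 2 else 1) *
      pderiv s(i, m) (pderiv s(i, l) f) x) := by
    intro m l
    unfold DD
    rw [pderiv_cmul (hf.pderiv _)]
  have hs : ∀ g : Fin d → ℝ, ∑ m, g m = g i + ∑ m ∈ Finset.univ.filter (fun m => m ≠ i), g m := by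
    intro g
    rw [Finset.filter_ne', Finset.add_sum_erase _ _ (Finset.mem_univ i)]
  have h1 : ∀ m, ∑ l, x s(m, l) * DD i m (DD i l f) x =
    (if i = m then 2 else 1) * (2 * (x s(i, m) * pderiv s(i, m) (pderiv s(i, i) f) x) +
      ∑ l ∈ Finset.univ.filter (fun m => m ≠ i), x s(m, l) * pderiv s(i, m) (pderiv s(i, l) f) x) := by
    intro m
    rw [hs, hD, mul_add, Finset.mul_sum]
    congr 1
    · rw [Sym2.eq_swap (a := m)]; simp; ring
    · refine Finset.sum_congr rfl fun l hl => ?_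
      rw [hD, if_neg (fun h : i = l => (Finset.mem_filter.1 hl).2 h.symm)]; ring
  unfold Lop MM
  rw [hs, h1, if_pos rfl]
  have h2 : ∑ m ∈ Finset.univ.filter (fun m => m ≠ i), ∑ l, x s(m, l) * DD i m (DD i l f) x =
      2 * ∑ m ∈ Finset.univ.filter (fun m => m ≠ i), x s(i, m) * pderiv s(i, m) (pderiv s(i, i) f) x
      + ∑ m ∈ Finset.univ.filter (fun m => m ≠ i), ∑ l ∈ Finset.univ.filter (fun l => l ≠ i),
          x s(m, l) * pderiv s(i, m) (pderiv s(i, l) f) x := by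
    rw [Finset.mul_sum, ← Finset.sum_add_distrib]
    refine Finset.sum_congr rfl fun m hm => ?_
    rw [h1, if_neg (fun h : i = m => (Finset.mem_filter.1 hm).2 h.symm), one_mul]
  rw [h2]
  simp only [pderiv_comm hf s(i, i)]
  unfold DD
  rw [if_pos rfl]
  ring

lemma DD_xmul {d : ℕ} {g : (Sym2 (Fin d) → ℝ) → ℝ} (hg : Sm g) (a b p q : Fin d)
    (x : Sym2 (Fin d) → ℝ) :
    DD a b (fun x => x s(p, q) * g x) x =
      ((if p = a then if q = b then 1 else 0 else 0) +
        (if q = a then if p = b then 1 else 0 else 0)) * g x + x s(p, q) * DD a b g x := by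
  have h : HasFDerivAt (fun x : Sym2 (Fin d) → ℝ => x s(p, q))
    (ContinuousLinearMap.proj (R := ℝ) (φ := fun _ => ℝ) s(p, q)) x := hasFDerivAt_apply _ _
  unfold DD pderiv
  have hh : fderiv ℝ (fun x => x s(p, q) * g x) x = _ := (h.mul (hg.diff x).hasFDerivAt).fderiv
  rw [hh]
  have : (Pi.single s(a, b) 1 : Sym2 (Fin d) → ℝ) s(p, q) =
    if (p = a ∧ q = b) ∨ (p = b ∧ q = a) then 1 else 0 := by
    rw [Pi.single_apply]; simp
  simp [this]
  by_cases h1 : p = a <;> by_cases h2 : q = b <;> by_cases h3 : q = a <;> by_cases h4 : p = b <;>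
    by_cases h5 : a = b <;> simp_all <;> ring

lemma DD_add {d : ℕ} {f g : (Sym2 (Fin d) → ℝ) → ℝ} (hf : Sm f) (hg : Sm g) (a b : Fin d) :
    DD a b (fun x => f x + g x) = fun x => DD a b f x + DD a b g x := by
  funext x
  unfold DD pderiv
  rw [fderiv_fun_add (hf.diff x) (hg.diff x), add_apply, mul_add]

lemma DD_cmul {d : ℕ} {f : (Sym2 (Fin d) → ℝ) → ℝ} (hf : Sm f) (c : ℝ) (a b : Fin d) :
    DD a b (fun x => c * f x) = fun x => c * DD a b f x := by
  unfold DD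
  rw [pderiv_cmul hf]
  funext x; ring

lemma DD_sum {d : ℕ} {f : Fin d → (Sym2 (Fin d) → ℝ) → ℝ} (hf : ∀ m, Sm (f m)) (a b : Fin d) :
    DD a b (fun x => ∑ m, f m x) = fun x => ∑ m, DD a b (f m) x := by
  funext x
  unfold DD pderiv
  rw [fderiv_fun_sum (fun m _ => (hf m).diff x), sum_apply, Finset.mul_sum]

lemma DD_MM {d : ℕ} {f : (Sym2 (Fin d) → ℝ) → ℝ} (hf : Sm f) (α : ℝ) (a b j : Fin d) :
    DD a b (MM α j f) = fun x => MM α j (DD a b f) x + 2 * DD j a (DD j b f) x := by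
  have hs : ∀ m l, Sm (fun x : Sym2 (Fin d) → ℝ => x s(m, l) * DD j m (DD j l f) x) :=
    fun m l => (contDiff_apply ℝ ℝ _).mul ((hf.DD _ _).DD _ _)
  have hs' : ∀ m, Sm (fun x : Sym2 (Fin d) → ℝ => ∑ l, x s(m, l) * DD j m (DD j l f) x) :=
    fun m => ContDiff.sum fun l _ => hs m l
  have hs2 : Sm (fun x : Sym2 (Fin d) → ℝ => ∑ m, ∑ l, x s(m, l) * DD j m (DD j l f) x) :=
    ContDiff.sum fun l _ => hs' l
  unfold MM
  rw [DD_add (contDiff_const.mul (hf.DD _ _)) hs2, DD_sum hs', DD_cmul (hf.DD _ _)]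
  simp only [DD_sum (hs _)]
  funext x
  simp only [DD_xmul ((hf.DD _ _).DD _ _), Finset.sum_add_distrib, add_mul]
  simp only [ite_mul, one_mul, zero_mul, Finset.sum_ite_irrel, Finset.sum_ite_eq', Finset.sum_ite_eq,
    Finset.sum_const_zero, Finset.mem_univ, if_true]
  simp only [DD_comm (hf.DD _ _) a b, DD_comm hf a b, DD_comm hf j b j a]
  ring

lemma MM_comm {d : ℕ} {f : (Sym2 (Fin d) → ℝ) → ℝ} (hf : Sm f) (α : ℝ) (i j : Fin d) 
    (x : Sym2 (Fin d) → ℝ) :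
    MM α i (MM α j f) x = MM α j (MM α i f) x := by
  have key : ∀ i j, MM α i (MM α j f) x = α * α * DD i i (DD j j f) x
     + 2 * α * DD i j (DD i j f) x
     + α * (∑ p, ∑ q, x s(p, q) * DD i i (DD j p (DD j q f)) x
        + ∑ p, ∑ q, x s(p, q) * DD j j (DD i p (DD i q f)) x)
     + ∑ m, ∑ l, ∑ p, ∑ q, x s(m, l) * x s(p, q) * DD i m (DD i l (DD j p (DD j q f))) x
     + 2 * ∑ m, ∑ l, x s(m, l) * DD i j (DD i m (DD j l f)) x
     + 2 * ∑ m, ∑ l, x s(m, l) * DD i j (DD i l (DD j m f)) x := by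
    intro i j
    have e : ∀ m l, DD i m (DD i l (MM α j f)) x = α * DD j j (DD i m (DD i l f)) x
        + ∑ p, ∑ q, x s(p, q) * DD i m (DD i l (DD j p (DD j q f))) x
        + 2 * DD i j (DD i l (DD j m f)) x + 2 * DD i j (DD i m (DD j l f)) x := by
      intro m l
      rw [DD_MM hf, DD_add ((hf.DD _ _).MM _ _) (contDiff_const.mul ((hf.DD _ _).DD _ _)),
        DD_cmul ((hf.DD _ _).DD _ _), DD_MM (hf.DD _ _)]
      have e1 : DD j i (DD j m (DD i l f)) = DD i j (DD i l (DD j m f)) := by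
        rw [DD_symm _ j i, DD_comm hf j m i l]
      have e2 : DD i m (DD j i (DD j l f)) = DD i j (DD i m (DD j l f)) := by
        rw [DD_symm _ j i, DD_comm (hf.DD _ _)]
      have e3 : ∀ p q, DD j p (DD j q (DD i m (DD i l f))) = DD i m (DD i l (DD j p (DD j q f))) := by
        intro p q
        rw [DD_comm (hf.DD _ _) j q i m, DD_comm hf j q i l, DD_comm ((hf.DD _ _).DD _ _) j p i m,
          DD_comm (hf.DD _ _) j p i l]
      simp only [MM, e1, e2, e3]
    have u : MM α i (MM α j f) x = α * DD i i (MM α j f) x +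
      ∑ m, ∑ l, x s(m, l) * DD i m (DD i l (MM α j f)) x := rfl
    rw [u]
    simp only [e]
    simp only [DD_MM hf]
    simp only [MM, mul_add, Finset.sum_add_distrib, Finset.mul_sum]
    have e4 : ∀ p q, DD j p (DD j q (DD i i f)) = DD i i (DD j p (DD j q f)) := by
      intro p q
      rw [DD_comm hf j q i i, DD_comm (hf.DD _ _) j p i i]
    simp only [e4, DD_comm hf j j i i, DD_symm _ j i]
    simp only [mul_left_comm, mul_assoc]
    ring
  rw [key, key]
  have s1 : ∑ m, ∑ l, ∑ p, ∑ q, x s(m, l) * x s(p, q) * DD i m (DD i l (DD j p (DD j q f))) x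
      = ∑ m, ∑ l, ∑ p, ∑ q, x s(m, l) * x s(p, q) * DD j m (DD j l (DD i p (DD i q f))) x := by
    have e3 : ∀ p q m l, DD j p (DD j q (DD i m (DD i l f))) = DD i m (DD i l (DD j p (DD j q f))) := by
        intro p q m l
        rw [DD_comm (hf.DD _ _) j q i m, DD_comm hf j q i l, DD_comm ((hf.DD _ _).DD _ _) j p i m,
          DD_comm (hf.DD _ _) j p i l]
    simp only [e3]
    simp only [← Fintype.sum_prod_type']
    have := Finset.sum_comm (s := (Finset.univ : Finset (Fin d × Fin d)))
      (t := (Finset.univ : Finset (Fin d × Fin d)))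
      (f := fun a b => x s(a.1, a.2) * x s(b.1, b.2) *
        DD i a.1 (DD i a.2 (DD j b.1 (DD j b.2 f))) x)
    simp only [Fintype.sum_prod_type] at this ⊢
    rw [this]
    simp only [mul_comm]
  have s2 : ∑ m, ∑ l, x s(m, l) * DD i j (DD i m (DD j l f)) x
      = ∑ m, ∑ l, x s(m, l) * DD j i (DD j l (DD i m f)) x := by
    simp only [DD_symm _ j i, DD_comm hf j _ i _]
  have s3 : ∑ m, ∑ l, x s(m, l) * DD i j (DD i l (DD j m f)) x
      = ∑ m, ∑ l, x s(m, l) * DD j i (DD j m (DD i l f)) x := by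
    simp only [DD_symm _ j i, DD_comm hf j _ i _]
  rw [s1, s2, s3, DD_comm hf i i j j]
  simp only [DD_symm _ i j]
  ring

lemma MM_cmul {d : ℕ} {f : (Sym2 (Fin d) → ℝ) → ℝ} (hf : Sm f) (c α : ℝ) (i : Fin d) :
    MM α i (fun x => c * f x) = fun x => c * MM α i f x := by
  funext x
  unfold MM
  simp only [DD_cmul hf, DD_cmul (hf.DD _ _), mul_add, Finset.mul_sum]
  congr 1
  · ring
  · refine Finset.sum_congr rfl fun m _ => Finset.sum_congr rfl fun l _ => ?_
    ring

/-- For `d ≥ 2` and any `C^∞` function `f`, the operators `L_i` commute: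
`L_i (L_j f) = L_j (L_i f)`. -/
theorem stmt_4 (d : ℕ) (hd : 2 ≤ d) (α : ℝ)
    (f : (Sym2 (Fin d) → ℝ) → ℝ) (hf : ContDiff ℝ (⊤ : ℕ∞) f) (i j : Fin d) :
    Lop α i (Lop α j f) = Lop α j (Lop α i f) := by
  have h : ∀ i, Sm (fun x => 1 / 2 * MM α i f x) := fun i =>
    contDiff_const.mul (Sm.MM hf α i)
  rw [Lop_eq hf, Lop_eq hf, Lop_eq (h j), Lop_eq (h i), MM_cmul (Sm.MM hf α j),
    MM_cmul (Sm.MM hf α i)]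
  funext x
  simp only [MM_comm hf α i j x]
end

section
/- Let a, b be real d×d matrices and set q_s := ∫₀ˢ exp(ub) aᵀa exp(ubᵀ) du for s ≥ 0. Let v be a real symmetric d×d matrix and t₀ > 0 be such that I_d − 2 q_s v is invertible for all s ∈ [0, t₀]. Then the matrix-valued function ψ(t) := exp(tbᵀ) (I_d − 2 v q_t)⁻¹ v exp(tb), defined for t ∈ [0, t₀], satisfies ψ(0) = v and, at every t ∈ [0, t₀], ψ is differentiable with derivative ψ'(t) = ψ(t) b + bᵀ ψ(t) + 2 ψ(t) aᵀa ψ(t) (matrix Riccati equation). -/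
open Matrix MeasureTheory

attribute [local instance] Matrix.normedAddCommGroup Matrix.normedSpace

/-- The matrix `q_s := ∫₀ˢ exp(ub) aᵀa exp(ubᵀ) du` (Bochner integral, computed entrywise). -/
noncomputable def qMat {d : ℕ} (a b : Matrix (Fin d) (Fin d) ℝ) (s : ℝ) :
    Matrix (Fin d) (Fin d) ℝ :=
  Matrix.of fun i j =>
    ∫ u in (0:ℝ)..s,
      (NormedSpace.exp (u • b) * (aᵀ * a) * NormedSpace.exp (u • bᵀ)) i j

theorem riccati_abstract {A : Type*} [NormedRing A] [NormedAlgebra ℝ A] [CompleteSpace A]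
    (b b' c v : A) (q : ℝ → A) (t : ℝ)
    (hq : HasDerivAt q (NormedSpace.exp (t • b) * c * NormedSpace.exp (t • b')) t)
    (hu : IsUnit (1 - (2:ℝ) • (v * q t))) :
    HasDerivAt (fun t => NormedSpace.exp (t • b') * Ring.inverse (1 - (2:ℝ) • (v * q t)) * v *
        NormedSpace.exp (t • b))
      (NormedSpace.exp (t • b') * Ring.inverse (1 - (2:ℝ) • (v * q t)) * v *
        NormedSpace.exp (t • b) * b +
       b' * (NormedSpace.exp (t • b') * Ring.inverse (1 - (2:ℝ) • (v * q t)) * v *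
        NormedSpace.exp (t • b)) +
       (2:ℝ) • ((NormedSpace.exp (t • b') * Ring.inverse (1 - (2:ℝ) • (v * q t)) * v *
        NormedSpace.exp (t • b)) * c * (NormedSpace.exp (t • b') *
        Ring.inverse (1 - (2:ℝ) • (v * q t)) * v * NormedSpace.exp (t • b)))) t := by
  have h1 := hasDerivAt_exp_smul_const (𝕂 := ℝ) b t
  have h2 := hasDerivAt_exp_smul_const' (𝕂 := ℝ) b' t
  have h3 := ((hq.const_mul v).const_smul (2:ℝ)).const_sub 1
  obtain ⟨u, hu⟩ := hu
  have h4 := hasFDerivAt_ringInverse (𝕜 := ℝ) u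
  rw [hu] at h4
  have h5 := h4.comp_hasDerivAt t h3
  have h6 := ((h2.mul h5).mul_const v).mul h1
  have hr : Ring.inverse (1 - (2:ℝ) • (v * q t)) = ((u⁻¹ : Aˣ) : A) := by
    rw [← hu, Ring.inverse_unit]
  refine h6.congr_deriv ?_
  simp [hr, mul_assoc, add_mul]
  abel

theorem qMat_hasDerivAt {d : ℕ} (a b : Matrix (Fin d) (Fin d) ℝ) (t : ℝ) :
    HasDerivAt (qMat a b)
      (NormedSpace.exp (t • b) * (aᵀ * a) * NormedSpace.exp (t • bᵀ)) t := by
  have hc : ∀ m : Matrix (Fin d) (Fin d) ℝ, Continuous fun u : ℝ => NormedSpace.exp (u • m) := by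
    intro m
    let : NormedRing (Matrix (Fin d) (Fin d) ℝ) := Matrix.linftyOpNormedRing
    let : NormedAlgebra ℝ (Matrix (Fin d) (Fin d) ℝ) := Matrix.linftyOpNormedAlgebra
    have : @CompleteSpace (Matrix (Fin d) (Fin d) ℝ)
        (Matrix.linftyOpNormedRing.toPseudoMetricSpace.toUniformSpace) :=
        inferInstanceAs (CompleteSpace (Fin d → Fin d → ℝ))
    exact continuous_iff_continuousAt.2 fun x =>
      (hasDerivAt_exp_smul_const (𝕂 := ℝ) m x).continuousAt
  have hcc := ((hc b).matrix_mul (continuous_const (y := aᵀ * a))).matrix_mul (hc bᵀ)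
  refine hasDerivAt_pi.2 fun i => hasDerivAt_pi.2 fun j => ?_
  have hij := hcc.matrix_elem i j
  exact intervalIntegral.integral_hasDerivAt_right (hij.intervalIntegrable _ _)
    (hij.stronglyMeasurableAtFilter _ _) hij.continuousAt

/-- **matrix Riccati equation.**
If `I - 2 q_s v` is invertible for all `s ∈ [0,t₀]`, then
`ψ(t) := exp(tbᵀ)(I - 2 v q_t)⁻¹ v exp(tb)` satisfies `ψ(0) = v` and on `[0,t₀]`
`ψ'(t) = ψ(t) b + bᵀ ψ(t) + 2 ψ(t) aᵀa ψ(t)`. -/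
theorem stmt_5 (d : ℕ) (a b v : Matrix (Fin d) (Fin d) ℝ) (hv : v.IsSymm)
    (t₀ : ℝ) (ht₀ : 0 < t₀)
    (hinv : ∀ s ∈ Set.Icc (0:ℝ) t₀, IsUnit (1 - (2:ℝ) • (qMat a b s * v))) :
    let ψ : ℝ → Matrix (Fin d) (Fin d) ℝ := fun t =>
      NormedSpace.exp (t • bᵀ) * (1 - (2:ℝ) • (v * qMat a b t))⁻¹ * v *
        NormedSpace.exp (t • b)
    ψ 0 = v ∧
      ∀ t ∈ Set.Icc (0:ℝ) t₀,
        HasDerivWithinAt ψ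
          (ψ t * b + bᵀ * ψ t + (2:ℝ) • (ψ t * (aᵀ * a) * ψ t))
          (Set.Icc (0:ℝ) t₀) t := by
  intro ψ
  constructor
  · have h0 : qMat a b 0 = 0 := by ext i j; simp [qMat]
    simp [ψ, h0]
  · intro t ht
    have hu : IsUnit (1 - (2:ℝ) • (v * qMat a b t)) := by
      have h := hinv t ht
      rw [Matrix.isUnit_iff_isUnit_det] at h ⊢
      rw [← Matrix.smul_mul, Matrix.det_one_sub_mul_comm, Matrix.mul_smul] at h
      exact h
    have key : HasDerivAt ψ (ψ t * b + bᵀ * ψ t + (2:ℝ) • (ψ t * (aᵀ * a) * ψ t)) t := by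
      have hq := qMat_hasDerivAt a b t
      simp only [ψ, Matrix.nonsing_inv_eq_ringInverse]
      let : NormedRing (Matrix (Fin d) (Fin d) ℝ) := Matrix.linftyOpNormedRing
      let : NormedAlgebra ℝ (Matrix (Fin d) (Fin d) ℝ) := Matrix.linftyOpNormedAlgebra
      have : @CompleteSpace (Matrix (Fin d) (Fin d) ℝ)
        (Matrix.linftyOpNormedRing.toPseudoMetricSpace.toUniformSpace) :=
        inferInstanceAs (CompleteSpace (Fin d → Fin d → ℝ))
      exact riccati_abstract b bᵀ (aᵀ * a) v (qMat a b) t hq hu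
    exact key.hasDerivWithinAt
end

section
/- Let a, b be real d×d matrices. For every t ∈ ℝ, the exponential of the 2d×2d block matrix [[b, −2aᵀa], [0, −bᵀ]] scaled by t is given by exp(t·[[b, −2aᵀa], [0, −bᵀ]]) = [[exp(tb), −2 exp(tb) ∫₀ᵗ exp(−sb) aᵀa exp(−sbᵀ) ds], [0, exp(−tbᵀ)]]. -/
open Matrix MeasureTheory

/-- Entrywise differentiability of a matrix-valued curve. -/
def EntryDeriv {m n : Type*} (F : ℝ → Matrix m n ℝ) (F' : Matrix m n ℝ) (t : ℝ) : Prop :=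
  ∀ i j, HasDerivAt (fun s => F s i j) (F' i j) t

theorem EntryDeriv.mul {l m n : Type*} [Fintype m] {F : ℝ → Matrix l m ℝ} {F' : Matrix l m ℝ}
    {G : ℝ → Matrix m n ℝ} {G' : Matrix m n ℝ} {t : ℝ}
    (hF : EntryDeriv F F' t) (hG : EntryDeriv G G' t) :
    EntryDeriv (fun s => F s * G s) (F' * G t + F t * G') t := by
  intro i j
  have h := HasDerivAt.fun_sum (u := Finset.univ)
    (fun k _ => (hF i k).mul (hG k j))
  simpa [Matrix.mul_apply, Finset.sum_add_distrib] using h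

section
attribute [local instance] Matrix.linftyOpNormedRing Matrix.linftyOpNormedAlgebra

theorem entryDeriv_exp {m : Type*} [Fintype m] [DecidableEq m] (A : Matrix m m ℝ) (t : ℝ) :
    EntryDeriv (fun s => NormedSpace.exp (s • A)) (A * NormedSpace.exp (t • A)) t := by
  intro i j
  have h := hasDerivAt_exp_smul_const' (𝕂 := ℝ) A t
  let L : Matrix m m ℝ →L[ℝ] ℝ :=
    LinearMap.toContinuousLinearMap (Matrix.entryLinearMap ℝ ℝ i j)
  exact (L.hasFDerivAt.comp_hasDerivAt t h)

end

theorem entryDeriv_exp_neg {m : Type*} [Fintype m] [DecidableEq m] (A : Matrix m m ℝ) (t : ℝ) :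
    EntryDeriv (fun s => NormedSpace.exp ((-s) • A)) (-A * NormedSpace.exp ((-t) • A)) t := by
  have h := entryDeriv_exp (-A) t
  simpa only [smul_neg, neg_smul] using h

theorem exp_mul_exp_neg {m : Type*} [Fintype m] [DecidableEq m] (A : Matrix m m ℝ) (t : ℝ) :
    NormedSpace.exp (t • A) * NormedSpace.exp ((-t) • A) = 1 := by
  rw [← Matrix.exp_add_of_commute]
  · simp
  · exact ((Commute.refl A).smul_left t).smul_right (-t)

theorem commute_exp {m : Type*} [Fintype m] [DecidableEq m] (A : Matrix m m ℝ) (t : ℝ) :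
    A * NormedSpace.exp (t • A) = NormedSpace.exp (t • A) * A := by
  exact (((Commute.refl A).smul_right t).exp_right).eq

/-- Uniqueness for the linear matrix equation. -/
theorem eq_exp_of_entryDeriv {m : Type*} [Fintype m] [DecidableEq m] (M : Matrix m m ℝ)
    (G : ℝ → Matrix m m ℝ) (h0 : G 0 = 1) (hG : ∀ t, EntryDeriv G (M * G t) t) (t : ℝ) :
    NormedSpace.exp (t • M) = G t := by
  have key : NormedSpace.exp ((-t) • M) * G t = 1 := by
    have hd : ∀ s, EntryDeriv (fun s => NormedSpace.exp ((-s) • M) * G s) 0 s := by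
      intro s
      have h := (entryDeriv_exp_neg M s).mul (hG s)
      have e : -M * NormedSpace.exp ((-s) • M) * G s + NormedSpace.exp ((-s) • M) * (M * G s)
          = 0 := by
        rw [← Matrix.mul_assoc, ← commute_exp, neg_mul, neg_mul, neg_add_cancel]
      rwa [e] at h
    ext i j
    have := is_const_of_deriv_eq_zero (fun s => (hd s i j).differentiableAt)
      (fun s => (hd s i j).deriv) t 0
    simpa [h0] using this
  calc NormedSpace.exp (t • M) = NormedSpace.exp (t • M) * (NormedSpace.exp ((-t) • M) * G t) := by
        rw [key, Matrix.mul_one]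
    _ = G t := by rw [← Matrix.mul_assoc, exp_mul_exp_neg, Matrix.one_mul]

theorem EntryDeriv.continuous {m n : Type*} {F F' : ℝ → Matrix m n ℝ}
    (h : ∀ t, EntryDeriv F (F' t) t) : Continuous F :=
  continuous_matrix fun i j => continuous_iff_continuousAt.2 fun t => (h t i j).continuousAt

/-- The exponential of the block matrix `t·[[b, −2aᵀa],[0, −bᵀ]]` is
`[[exp(tb), −2 exp(tb) ∫₀ᵗ exp(−sb) aᵀa exp(−sbᵀ) ds],[0, exp(−tbᵀ)]]`. -/
theorem stmt_6 (d : ℕ) (a b : Matrix (Fin d) (Fin d) ℝ) (t : ℝ) :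
    NormedSpace.exp
        (t • Matrix.fromBlocks b (-((2:ℝ) • (aᵀ * a))) 0 (-bᵀ)) =
      Matrix.fromBlocks
        (NormedSpace.exp (t • b))
        (-((2:ℝ) • (NormedSpace.exp (t • b) *
          Matrix.of fun i j =>
            ∫ s in (0:ℝ)..t,
              (NormedSpace.exp ((-s) • b) * (aᵀ * a) *
                NormedSpace.exp ((-s) • bᵀ)) i j)))
        0
        (NormedSpace.exp ((-t) • bᵀ)) := by
  refine eq_exp_of_entryDeriv _ (fun t => Matrix.fromBlocks
        (NormedSpace.exp (t • b))
        (-((2:ℝ) • (NormedSpace.exp (t • b) *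
          Matrix.of fun i j =>
            ∫ s in (0:ℝ)..t,
              (NormedSpace.exp ((-s) • b) * (aᵀ * a) *
                NormedSpace.exp ((-s) • bᵀ)) i j)))
        0
        (NormedSpace.exp ((-t) • bᵀ))) ?_ ?_ t
  · have hz : (Matrix.of fun _ _ => 0 : Matrix (Fin d) (Fin d) ℝ) = 0 := rfl
    simp [hz]
  intro t
  have hc : Continuous fun s : ℝ => NormedSpace.exp ((-s) • b) * (aᵀ * a) *
      NormedSpace.exp ((-s) • bᵀ) :=
    ((EntryDeriv.continuous (entryDeriv_exp_neg b)).matrix_mul continuous_const).matrix_mul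
      (EntryDeriv.continuous (entryDeriv_exp_neg bᵀ))
  have hI : EntryDeriv (fun t => Matrix.of fun i j => ∫ s in (0:ℝ)..t,
      (NormedSpace.exp ((-s) • b) * (aᵀ * a) * NormedSpace.exp ((-s) • bᵀ)) i j)
      (NormedSpace.exp ((-t) • b) * (aᵀ * a) * NormedSpace.exp ((-t) • bᵀ)) t := by
    intro i j
    exact (hc.matrix_elem i j).integral_hasStrictDerivAt 0 t |>.hasDerivAt
  have hU := (entryDeriv_exp b t).mul hI
  have e : NormedSpace.exp (t • b) * (NormedSpace.exp ((-t) • b) * (aᵀ * a) *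
      NormedSpace.exp ((-t) • bᵀ)) = aᵀ * a * NormedSpace.exp ((-t) • bᵀ) := by
    rw [← Matrix.mul_assoc, ← Matrix.mul_assoc, exp_mul_exp_neg, Matrix.one_mul]
  rw [e] at hU
  rw [Matrix.fromBlocks_multiply]
  rintro (i | i) (j | j)
  · simpa using entryDeriv_exp b t i j
  · have h := ((hU i j).const_mul (2:ℝ)).neg
    refine h.congr_deriv ?_
    simp [Matrix.mul_assoc]
    ring
  · simpa using hasDerivAt_const t (0:ℝ)
  · simpa using entryDeriv_exp_neg bᵀ t i j
end

section
/- Let a, b be real d×d matrices, t > 0, and q_s := ∫₀ˢ exp(ub) aᵀa exp(ubᵀ) du for s ∈ [0, t]. For a real symmetric d×d matrix v, the following are equivalent: (i) I_d − 2 q_s v is invertible for all s ∈ [0, t]; (ii) I_d − 2 √(q_s) · v · √(q_s) is positive definite for all s ∈ [0, t], where √(q_s) is the positive semidefinite square root of q_s. Moreover, the set D := {v ∈ S_d(ℝ) : ∀ s ∈ [0, t], I_d − 2 q_s v is invertible} is an open convex subset of the space S_d(ℝ) of real symmetric d×d matrices. -/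
open Matrix MeasureTheory
open scoped MatrixOrder

section aux
open scoped Matrix.Norms.L2Operator

lemma aux_sqrt_cont {d : ℕ} :
    ContinuousOn (CFC.sqrt : Matrix (Fin d) (Fin d) ℝ → _) {A | 0 ≤ A} :=
  CFC.continuousOn_sqrt

lemma aux_exp_cont {d : ℕ} (b : Matrix (Fin d) (Fin d) ℝ) :
    Continuous fun u : ℝ => NormedSpace.exp (u • b) := by
  letI : NormedAlgebra ℚ (Matrix (Fin d) (Fin d) ℝ) := NormedAlgebra.restrictScalars ℚ ℝ _
  exact NormedSpace.exp_continuous.comp (by fun_prop)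

end aux

lemma qMat_cont {d : ℕ} (a b : Matrix (Fin d) (Fin d) ℝ) : Continuous (qMat a b) := by
  refine continuous_matrix fun i j => ?_
  simp only [qMat, Matrix.of_apply]
  have h : Continuous fun u : ℝ =>
      (NormedSpace.exp (u • b) * (aᵀ * a) * NormedSpace.exp (u • bᵀ)) i j := by
    have h1 := aux_exp_cont b
    have h2 := aux_exp_cont bᵀ
    exact ((h1.matrix_mul continuous_const).matrix_mul h2).matrix_elem i j
  exact intervalIntegral.continuous_primitive (fun _ _ => h.intervalIntegrable _ _) 0

lemma qMat_zero {d : ℕ} (a b : Matrix (Fin d) (Fin d) ℝ) : qMat a b 0 = 0 := by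
  ext i j
  simp [qMat]

/-- Openness of a condition quantified over a compact set. -/
lemma isOpen_forall_compact {X Y : Type*} [TopologicalSpace X] [TopologicalSpace Y]
    {K : Set Y} (hK : IsCompact K) {W : Set (X × Y)} (hW : IsOpen W) :
    IsOpen {x | ∀ y ∈ K, (x, y) ∈ W} := by
  rw [isOpen_iff_eventually]
  intro x hx
  exact hK.eventually_forall_of_forall_eventually fun y hy => hW.mem_nhds (hx y hy)

/-- Positive definiteness of a Hermitian matrix, checked on the unit sphere. -/
lemma posDef_iff_sphere {d : ℕ} {M : Matrix (Fin d) (Fin d) ℝ} (hM : M.IsHermitian) :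
    M.PosDef ↔ ∀ x ∈ Metric.sphere (0 : Fin d → ℝ) 1, 0 < x ⬝ᵥ M *ᵥ x := by
  rw [posDef_iff_dotProduct_mulVec]
  constructor
  · rintro ⟨_, h⟩ x hx
    have hx0 : x ≠ 0 := by
      rintro rfl
      simp at hx
    simpa using h hx0
  · intro h
    refine ⟨hM, fun x hx => ?_⟩
    have hn : 0 < ‖x‖ := norm_pos_iff.2 hx
    have h1 := h (‖x‖⁻¹ • x) (by simp [norm_smul, hn.ne'])
    rw [mulVec_smul, dotProduct_smul, smul_dotProduct, smul_eq_mul, smul_eq_mul] at h1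
    have hi : 0 < ‖x‖⁻¹ := inv_pos.2 hn
    have h2 := pos_of_mul_pos_right h1 hi.le
    have h3 := pos_of_mul_pos_right h2 hi.le
    simpa using h3

lemma path_posDef {d : ℕ} {X : Type*} [TopologicalSpace X] [PreconnectedSpace X]
    (N : X → Matrix (Fin d) (Fin d) ℝ) (hc : Continuous N) (hh : ∀ x, (N x).IsHermitian)
    (hu : ∀ x, IsUnit (N x)) (x0 : X) (h0 : (N x0).PosDef) (x : X) : (N x).PosDef := by
  have hop : IsOpen {x | (N x).PosDef} := by
    have : {x | (N x).PosDef} =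
        {x | ∀ y ∈ Metric.sphere (0 : Fin d → ℝ) 1, (x, y) ∈
          {p : X × (Fin d → ℝ) | 0 < p.2 ⬝ᵥ N p.1 *ᵥ p.2}} := by
      ext x
      exact posDef_iff_sphere (hh x)
    rw [this]
    refine isOpen_forall_compact (isCompact_sphere _ _) ?_
    refine isOpen_lt continuous_const ?_
    exact continuous_snd.dotProduct ((hc.comp continuous_fst).matrix_mulVec continuous_snd)
  have hcl : IsClosed {x | (N x).PosDef} := by
    have : {x | (N x).PosDef} = ⋂ y : Fin d → ℝ, {x | 0 ≤ y ⬝ᵥ N x *ᵥ y} := by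
      ext x
      simp only [Set.mem_ofPred_eq, Set.mem_iInter]
      constructor
      · intro h y
        simpa using h.posSemidef.dotProduct_mulVec_nonneg y
      · intro h
        have hp : (N x).PosSemidef :=
          posSemidef_iff_dotProduct_mulVec.2 ⟨hh x, fun y => by simpa using h y⟩
        exact hp.posDef_iff_isUnit.2 (hu x)
    rw [this]
    refine isClosed_iInter fun y => isClosed_le continuous_const ?_
    exact continuous_const.dotProduct (hc.matrix_mulVec continuous_const)
  have := IsClopen.eq_univ ⟨hcl, hop⟩ ⟨x0, h0⟩
  exact (this ▸ Set.mem_univ x : x ∈ {x | (N x).PosDef})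

lemma isUnit_iff_aux {d : ℕ} {q : Matrix (Fin d) (Fin d) ℝ} (hq : q.PosSemidef)
    (v : Matrix (Fin d) (Fin d) ℝ) :
    IsUnit (1 - (2:ℝ) • (q * v)) ↔ IsUnit (1 - (2:ℝ) • (CFC.sqrt q * v * CFC.sqrt q)) := by
  have hs : CFC.sqrt q * CFC.sqrt q = q := CFC.sqrt_mul_sqrt_self q hq.nonneg
  rw [isUnit_iff_isUnit_det, isUnit_iff_isUnit_det]
  have e1 : (2:ℝ) • (q * v) = CFC.sqrt q * ((2:ℝ) • (CFC.sqrt q * v)) := by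
    rw [mul_smul_comm, ← mul_assoc, hs]
  have e2 : (2:ℝ) • (CFC.sqrt q * v * CFC.sqrt q) = ((2:ℝ) • (CFC.sqrt q * v)) * CFC.sqrt q := by
    rw [smul_mul_assoc]
  rw [e1, e2, det_one_sub_mul_comm]

lemma herm_aux {d : ℕ} (q : Matrix (Fin d) (Fin d) ℝ)
    {v : Matrix (Fin d) (Fin d) ℝ} (hv : v.IsSymm) :
    (1 - (2:ℝ) • (CFC.sqrt q * v * CFC.sqrt q)).IsHermitian := by
  have hr : (CFC.sqrt q)ᵀ = CFC.sqrt q := by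
    have := (nonneg_iff_posSemidef.1 (CFC.sqrt_nonneg q)).isHermitian
    rwa [IsHermitian, conjTranspose_eq_transpose_of_trivial] at this
  rw [IsHermitian, conjTranspose_eq_transpose_of_trivial]
  simp only [transpose_sub, transpose_one, transpose_smul, transpose_mul, hr, hv.eq, mul_assoc]

lemma equiv_aux {d : ℕ} (a b : Matrix (Fin d) (Fin d) ℝ) (t : ℝ) (ht : 0 < t)
    (hq : ∀ s ∈ Set.Icc (0:ℝ) t, (qMat a b s).PosSemidef)
    (v : Matrix (Fin d) (Fin d) ℝ) (hv : v.IsSymm) :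
    (∀ s ∈ Set.Icc (0:ℝ) t, IsUnit (1 - (2:ℝ) • (qMat a b s * v))) ↔
        (∀ s, ∀ _hs : s ∈ Set.Icc (0:ℝ) t,
          (1 - (2:ℝ) • (CFC.sqrt (qMat a b s) * v * CFC.sqrt (qMat a b s))).PosDef) := by
  constructor
  · intro h s hs
    have : PreconnectedSpace (Set.Icc (0:ℝ) t) :=
      Subtype.preconnectedSpace isPreconnected_Icc
    have hr : Continuous fun x : Set.Icc (0:ℝ) t => CFC.sqrt (qMat a b x) :=
      aux_sqrt_cont.comp_continuous ((qMat_cont a b).comp continuous_subtype_val)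
        fun x => (hq x x.2).nonneg
    refine path_posDef (X := Set.Icc (0:ℝ) t)
      (fun x => 1 - (2:ℝ) • (CFC.sqrt (qMat a b x) * v * CFC.sqrt (qMat a b x)))
      ?_ (fun x => herm_aux _ hv) (fun x => (isUnit_iff_aux (hq x x.2) v).1 (h x x.2))
      ⟨0, le_rfl, ht.le⟩ ?_ ⟨s, hs⟩
    · exact continuous_const.sub
        (((hr.matrix_mul continuous_const).matrix_mul hr).const_smul (2:ℝ))
    · simp [qMat_zero, PosDef.one]
  · intro h s hs
    exact (isUnit_iff_aux (hq s hs) v).2 (h s hs).isUnit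

/-- For a symmetric `v`: `I − 2 q_s v` is invertible for all `s ∈ [0,t]`
iff `I − 2 √(q_s) v √(q_s)` is positive definite for all `s ∈ [0,t]`; moreover the set
`D = {v ∈ S_d(ℝ) : ∀ s ∈ [0,t], I − 2 q_s v invertible}` is convex and open in `S_d(ℝ)`. -/
theorem stmt_9 (d : ℕ) (a b : Matrix (Fin d) (Fin d) ℝ) (t : ℝ) (ht : 0 < t)
    (hq : ∀ s ∈ Set.Icc (0:ℝ) t, (qMat a b s).PosSemidef) :
    (∀ v : Matrix (Fin d) (Fin d) ℝ, v.IsSymm →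
      ((∀ s ∈ Set.Icc (0:ℝ) t, IsUnit (1 - (2:ℝ) • (qMat a b s * v))) ↔
        (∀ s, ∀ hs : s ∈ Set.Icc (0:ℝ) t,
          (1 - (2:ℝ) • (CFC.sqrt (qMat a b s) * v * CFC.sqrt (qMat a b s))).PosDef))) ∧
    (let D : Set (Matrix (Fin d) (Fin d) ℝ) :=
      {v | v.IsSymm ∧ ∀ s ∈ Set.Icc (0:ℝ) t, IsUnit (1 - (2:ℝ) • (qMat a b s * v))}
     Convex ℝ D ∧
       ∃ U : Set (Matrix (Fin d) (Fin d) ℝ),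
         IsOpen U ∧ D = U ∩ {v | v.IsSymm}) := by
  refine ⟨equiv_aux a b t ht hq, ?_⟩
  intro D
  constructor
  · intro v hv w hw α β hα hβ hαβ
    have hs : (α • v + β • w).IsSymm := (hv.1.smul α).add (hw.1.smul β)
    refine ⟨hs, (equiv_aux a b t ht hq _ hs).2 fun s hs' => ?_⟩
    have h1 := (equiv_aux a b t ht hq v hv.1).1 hv.2 s hs'
    have h2 := (equiv_aux a b t ht hq w hw.1).1 hw.2 s hs'
    generalize CFC.sqrt (qMat a b s) = r at h1 h2
    have e : 1 - (2:ℝ) • (r * (α • v + β • w) * r) =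
        α • (1 - (2:ℝ) • (r * v * r)) + β • (1 - (2:ℝ) • (r * w * r)) := by
      have : (1 : Matrix (Fin d) (Fin d) ℝ) = α • 1 + β • 1 := by
        rw [← add_smul, hαβ, one_smul]
      rw [mul_add, add_mul, mul_smul_comm, mul_smul_comm, smul_mul_assoc, smul_mul_assoc]
      nth_rewrite 1 [this]
      module
    rw [e]
    rcases hα.eq_or_lt with rfl | hα
    · obtain rfl : β = 1 := by linarith
      simpa using h2
    · exact (h1.smul hα).add_posSemidef (h2.posSemidef.smul hβ)
  · refine ⟨{v | ∀ s ∈ Set.Icc (0:ℝ) t, (v, s) ∈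
        {p : Matrix (Fin d) (Fin d) ℝ × ℝ | (1 - (2:ℝ) • (qMat a b p.2 * p.1)).det ≠ 0}},
      isOpen_forall_compact isCompact_Icc ?_, ?_⟩
    · refine isOpen_ne_fun ?_ continuous_const
      exact (continuous_const.sub ((((qMat_cont a b).comp continuous_snd).matrix_mul
        continuous_fst).const_smul (2:ℝ))).matrix_det
    · ext v
      simp only [D, Set.mem_inter_iff, Set.mem_ofPred_eq, isUnit_iff_isUnit_det,
        isUnit_iff_ne_zero]
      exact and_comm
end

section
/- Let w, q, x be real symmetric positive semidefinite d×d matrices and let m be any real d×d matrix. Then: (i) I_d + 2 q w is invertible and det(I_d + 2 q w) = det(I_d + 2 √w q √w) ≥ 1; (ii) Tr(√w · (I_d + 2 √w q √w)⁻¹ · √w · m x mᵀ) ≥ 0; consequently, for every α ≥ 0, det(I_d + 2 q w)^{−α/2} · exp(−Tr(√w (I_d + 2 √w q √w)⁻¹ √w m x mᵀ)) ≤ 1. -/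
open Matrix

open scoped ComplexOrder in
/-- The positive semidefinite square root of a positive semidefinite matrix -/
noncomputable def Matrix.PosSemidef.sqrt {n 𝕜 : Type*} [Fintype n] [RCLike 𝕜] [DecidableEq n]
    {A : Matrix n n 𝕜} (hA : PosSemidef A) : Matrix n n 𝕜 :=
  hA.1.eigenvectorUnitary.1 * diagonal ((↑) ∘ Real.sqrt ∘ hA.1.eigenvalues) *
  (star hA.1.eigenvectorUnitary : Matrix n n 𝕜)

lemma aux_sqrt_mul {d : ℕ} {w : Matrix (Fin d) (Fin d) ℝ} (hw : w.PosSemidef) :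
    hw.sqrt * hw.sqrt = w := by
  have h1 : (star hw.1.eigenvectorUnitary : Matrix (Fin d) (Fin d) ℝ) *
      hw.1.eigenvectorUnitary.1 = 1 := Unitary.coe_star_mul_self _
  have h2 := hw.1.spectral_theorem
  rw [Unitary.conjStarAlgAut_apply] at h2
  conv_rhs => rw [h2]
  unfold Matrix.PosSemidef.sqrt
  set U := hw.1.eigenvectorUnitary.1
  set V := (star hw.1.eigenvectorUnitary : Matrix (Fin d) (Fin d) ℝ)
  set D : Matrix (Fin d) (Fin d) ℝ := diagonal ((↑) ∘ Real.sqrt ∘ hw.1.eigenvalues) with hD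
  have h3 : D * D = diagonal (RCLike.ofReal ∘ hw.1.eigenvalues) := by
    rw [hD, diagonal_mul_diagonal]
    congr 1
    ext i
    simpa using Real.mul_self_sqrt (hw.eigenvalues_nonneg i)
  rw [← h3]
  calc U * D * V * (U * D * V) = U * D * (V * U) * D * V := by simp only [Matrix.mul_assoc]
    _ = _ := by rw [h1]; simp only [Matrix.mul_assoc, Matrix.mul_one]

lemma aux_sqrt_herm {d : ℕ} {w : Matrix (Fin d) (Fin d) ℝ} (hw : w.PosSemidef) :
    hw.sqrtᴴ = hw.sqrt := by
  unfold Matrix.PosSemidef.sqrt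
  rw [conjTranspose_mul, conjTranspose_mul, diagonal_conjTranspose, Matrix.mul_assoc]
  simp [star_eq_conjTranspose]

lemma aux_det {d : ℕ} {A : Matrix (Fin d) (Fin d) ℝ} (hA : A.PosSemidef) :
    1 ≤ (1 + A).det := by
  have h1 : (star hA.1.eigenvectorUnitary : Matrix (Fin d) (Fin d) ℝ) *
      hA.1.eigenvectorUnitary.1 = 1 := Unitary.coe_star_mul_self _
  have h2 := hA.1.spectral_theorem
  rw [Unitary.conjStarAlgAut_apply, Matrix.mul_assoc] at h2
  rw [h2, det_one_add_mul_comm, Matrix.mul_assoc, h1, Matrix.mul_one, ← diagonal_one,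
    diagonal_add, det_diagonal]
  calc (1:ℝ) = ∏ _i : Fin d, (1:ℝ) := by simp
    _ ≤ _ := Finset.prod_le_prod (fun _ _ => zero_le_one)
      (fun i _ => by simpa using hA.eigenvalues_nonneg i)

lemma aux_trace {d : ℕ} {A B : Matrix (Fin d) (Fin d) ℝ} (hA : A.PosSemidef)
    (hB : B.PosSemidef) : 0 ≤ (A * B).trace := by
  rw [← aux_sqrt_mul hB, ← Matrix.mul_assoc, trace_mul_comm, ← Matrix.mul_assoc]
  have := hA.mul_mul_conjTranspose_same hB.sqrt
  rw [aux_sqrt_herm] at this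
  exact this.trace_nonneg

/-- For `w, q, x` symmetric positive semidefinite and `m` arbitrary:
(i) `I + 2qw` is invertible and `det(I + 2qw) = det(I + 2√w q √w) ≥ 1`;
(ii) `Tr(√w (I + 2√w q √w)⁻¹ √w m x mᵀ) ≥ 0`;
(iii) for every `α ≥ 0`,
`det(I + 2qw)^{−α/2} exp(−Tr(√w (I + 2√w q √w)⁻¹ √w m x mᵀ)) ≤ 1`. -/
theorem stmt_10 (d : ℕ) (w q x m : Matrix (Fin d) (Fin d) ℝ)
    (hw : w.PosSemidef) (hq : q.PosSemidef) (hx : x.PosSemidef) :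
    IsUnit (1 + (2:ℝ) • (q * w)) ∧
    (1 + (2:ℝ) • (q * w)).det = (1 + (2:ℝ) • (hw.sqrt * q * hw.sqrt)).det ∧
    1 ≤ (1 + (2:ℝ) • (q * w)).det ∧
    0 ≤ (hw.sqrt * (1 + (2:ℝ) • (hw.sqrt * q * hw.sqrt))⁻¹ * hw.sqrt * (m * x * mᵀ)).trace ∧
    ∀ α : ℝ, 0 ≤ α →
      ((1 + (2:ℝ) • (q * w)).det) ^ (-(α / 2)) *
        Real.exp (-(hw.sqrt * (1 + (2:ℝ) • (hw.sqrt * q * hw.sqrt))⁻¹ * hw.sqrt *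
          (m * x * mᵀ)).trace) ≤ 1 := by
  have hs := aux_sqrt_herm hw
  have hA : ((2:ℝ) • (hw.sqrt * q * hw.sqrt)).PosSemidef := by
    have := hq.mul_mul_conjTranspose_same hw.sqrt
    rw [hs] at this
    exact this.smul (by norm_num)
  have hdet : (1 + (2:ℝ) • (q * w)).det = (1 + (2:ℝ) • (hw.sqrt * q * hw.sqrt)).det := by
    conv_lhs => rw [← aux_sqrt_mul hw]
    rw [← Matrix.mul_assoc, ← Matrix.smul_mul, det_one_add_mul_comm, Matrix.mul_smul,
      Matrix.mul_assoc]
  have h1 : 1 ≤ (1 + (2:ℝ) • (q * w)).det := hdet ▸ aux_det hA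
  have ht : 0 ≤ (hw.sqrt * (1 + (2:ℝ) • (hw.sqrt * q * hw.sqrt))⁻¹ * hw.sqrt *
      (m * x * mᵀ)).trace := by
    apply aux_trace
    · have := (PosSemidef.one.add hA).inv.mul_mul_conjTranspose_same hw.sqrt
      rwa [hs] at this
    · simpa using hx.mul_mul_conjTranspose_same m
  refine ⟨?_, hdet, h1, ht, fun α hα => ?_⟩
  · rw [Matrix.isUnit_iff_isUnit_det]
    exact (zero_lt_one.trans_le h1).ne'.isUnit
  · apply mul_le_one₀ (Real.rpow_le_one_of_one_le_of_nonpos h1 (by linarith))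
      (Real.exp_pos _).le
    exact Real.exp_le_one_iff.2 (by linarith)
end

section
/- Let a, b be real d×d matrices such that b·(aᵀa) = (aᵀa)·b, and let t > 0. Set M := ∫₀ᵗ exp(sb) exp(sbᵀ) ds. Then M is symmetric positive definite, aᵀa commutes with M, and ∫₀ᵗ exp(sb) aᵀa exp(sbᵀ) ds = √M · (aᵀa) · √M, where √M is the positive definite square root of M. -/
open Matrix MeasureTheory
open scoped MatrixOrder

section helpers
attribute [local instance] Matrix.linftyOpNormedRing Matrix.linftyOpNormedAlgebra

theorem aux_cont (d : ℕ) (b : Matrix (Fin d) (Fin d) ℝ) :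
    Continuous fun s : ℝ => NormedSpace.exp (s • b) := by
  letI : NormedAlgebra ℚ (Matrix (Fin d) (Fin d) ℝ) := NormedAlgebra.restrictScalars ℚ ℝ _
  exact NormedSpace.exp_continuous.comp (continuous_id.smul continuous_const)

theorem aux_comm (d : ℕ) (S b : Matrix (Fin d) (Fin d) ℝ) (h : Commute S b) :
    Commute S (NormedSpace.exp b) := by
  letI : NormedAlgebra ℚ (Matrix (Fin d) (Fin d) ℝ) := NormedAlgebra.restrictScalars ℚ ℝ _
  exact h.exp_right

end helpers

/-- entrywise integral of a matrix-valued function -/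
noncomputable def auxInt {d : ℕ} (t : ℝ) (F : ℝ → Matrix (Fin d) (Fin d) ℝ) :
    Matrix (Fin d) (Fin d) ℝ := Matrix.of fun i j => ∫ s in (0:ℝ)..t, F s i j

theorem aux_int {d : ℕ} {F : ℝ → Matrix (Fin d) (Fin d) ℝ} (hF : Continuous F) (t : ℝ)
    (i j : Fin d) : IntervalIntegrable (fun s => F s i j) volume 0 t :=
  (hF.matrix_elem i j).intervalIntegrable _ _

theorem auxInt_mul_left {d : ℕ} {F : ℝ → Matrix (Fin d) (Fin d) ℝ} (hF : Continuous F) (t : ℝ)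
    (S : Matrix (Fin d) (Fin d) ℝ) : S * auxInt t F = auxInt t (fun s => S * F s) := by
  ext i j
  simp only [auxInt, Matrix.mul_apply, Matrix.of_apply]
  rw [intervalIntegral.integral_finset_sum
    (fun k _ => (aux_int hF t k j).const_mul _)]
  simp

theorem auxInt_mul_right {d : ℕ} {F : ℝ → Matrix (Fin d) (Fin d) ℝ} (hF : Continuous F) (t : ℝ)
    (S : Matrix (Fin d) (Fin d) ℝ) : auxInt t F * S = auxInt t (fun s => F s * S) := by
  ext i j
  simp only [auxInt, Matrix.mul_apply, Matrix.of_apply]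
  rw [intervalIntegral.integral_finset_sum
    (fun k _ => (aux_int hF t i k).mul_const _)]
  simp

theorem auxInt_quad {d : ℕ} {F : ℝ → Matrix (Fin d) (Fin d) ℝ} (hF : Continuous F) (t : ℝ)
    (z : Fin d → ℝ) : z ⬝ᵥ (auxInt t F *ᵥ z) = ∫ s in (0:ℝ)..t, z ⬝ᵥ (F s *ᵥ z) := by
  simp only [auxInt, Matrix.mulVec, dotProduct, Matrix.of_apply]
  rw [intervalIntegral.integral_finset_sum]
  · refine Finset.sum_congr rfl fun i _ => ?_
    rw [intervalIntegral.integral_const_mul, intervalIntegral.integral_finset_sum]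
    · simp
    · exact fun k _ => (aux_int hF t i k).mul_const _
  · intro i _
    refine Continuous.intervalIntegrable ?_ _ _
    exact continuous_const.mul (continuous_finsetSum _ fun k _ =>
      (hF.matrix_elem i k).mul continuous_const)

theorem auxInt_posDef {d : ℕ} {F : ℝ → Matrix (Fin d) (Fin d) ℝ} (hF : Continuous F) (t : ℝ)
    (ht : 0 < t) (hp : ∀ s, (F s).PosDef) : (auxInt t F).PosDef := by
  refine Matrix.PosDef.of_dotProduct_mulVec_pos ?_ ?_
  · ext i j
    simp only [auxInt, Matrix.conjTranspose_apply, Matrix.of_apply, star_trivial]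
    refine intervalIntegral.integral_congr fun s _ => ?_
    simpa using (hp s).isHermitian.apply i j
  · intro z hz
    rw [star_trivial, auxInt_quad hF]
    refine intervalIntegral.intervalIntegral_pos_of_pos_on ?_ ?_ ht
    · refine Continuous.intervalIntegrable ?_ _ _
      exact continuous_const.dotProduct (hF.matrix_mulVec continuous_const)
    · intro s _
      simpa using (hp s).dotProduct_mulVec_pos hz

theorem aux_posDef (d : ℕ) (b : Matrix (Fin d) (Fin d) ℝ) (s : ℝ) :
    (NormedSpace.exp (s • b) * NormedSpace.exp (s • bᵀ)).PosDef := by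
  rw [← Matrix.transpose_smul, Matrix.exp_transpose, ← Matrix.conjTranspose_eq_transpose_of_trivial]
  have := (Matrix.PosDef.one (n := Fin d) (R := ℝ)).mul_mul_conjTranspose_same
    (B := NormedSpace.exp (s • b))
    (Matrix.vecMul_injective_of_isUnit (Matrix.isUnit_exp _))
  simpa using this

/-- If `b` commutes with `aᵀa` and `t > 0`, then
`M := ∫₀ᵗ exp(sb) exp(sbᵀ) ds` is symmetric positive definite, commutes with `aᵀa`, and
`∫₀ᵗ exp(sb) aᵀa exp(sbᵀ) ds = √M (aᵀa) √M`. -/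
theorem stmt_11 (d : ℕ) (a b : Matrix (Fin d) (Fin d) ℝ)
    (hcomm : b * (aᵀ * a) = (aᵀ * a) * b) (t : ℝ) (ht : 0 < t) :
    let M : Matrix (Fin d) (Fin d) ℝ :=
      Matrix.of fun i j =>
        ∫ s in (0:ℝ)..t, (NormedSpace.exp (s • b) * NormedSpace.exp (s • bᵀ)) i j
    ∃ hM : M.PosDef,
      (aᵀ * a) * M = M * (aᵀ * a) ∧
      (Matrix.of fun i j =>
          ∫ s in (0:ℝ)..t,
            (NormedSpace.exp (s • b) * (aᵀ * a) * NormedSpace.exp (s • bᵀ)) i j) =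
        CFC.sqrt M * (aᵀ * a) * CFC.sqrt M := by
  intro M
  have hF : Continuous fun s : ℝ => NormedSpace.exp (s • b) * NormedSpace.exp (s • bᵀ) :=
    (aux_cont d b).matrix_mul (aux_cont d bᵀ)
  have hMdef : M = auxInt t fun s => NormedSpace.exp (s • b) * NormedSpace.exp (s • bᵀ) := rfl
  have hM : M.PosDef := auxInt_posDef hF t ht (aux_posDef d b)
  have hc1 : Commute (aᵀ * a) b := hcomm.symm
  have hc2 : Commute (aᵀ * a) bᵀ := by
    have := congrArg Matrix.transpose hcomm
    simp only [Matrix.transpose_mul, Matrix.transpose_transpose] at this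
    exact this
  have he1 : ∀ s : ℝ, Commute (aᵀ * a) (NormedSpace.exp (s • b)) :=
    fun s => aux_comm d _ _ (hc1.smul_right s)
  have he2 : ∀ s : ℝ, Commute (aᵀ * a) (NormedSpace.exp (s • bᵀ)) :=
    fun s => aux_comm d _ _ (hc2.smul_right s)
  have hSM : (aᵀ * a) * M = M * (aᵀ * a) := by
    rw [hMdef, auxInt_mul_left hF, auxInt_mul_right hF]
    congr 1
    funext s
    exact ((he1 s).mul_right (he2 s)).eq
  refine ⟨hM, hSM, ?_⟩
  have hsq : Commute (CFC.sqrt M) (aᵀ * a) := by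
    have : Commute M (aᵀ * a) := hSM.symm
    exact this.cfcₙ_nnreal _
  rw [hsq.eq, mul_assoc, CFC.sqrt_mul_sqrt_self M hM.posSemidef.nonneg, hMdef, auxInt_mul_left hF]
  change auxInt t _ = _
  congr 1
  funext s
  rw [← (he1 s).eq, mul_assoc]
end

section
/- Let d ≥ 2 and let y be a real symmetric positive semidefinite d×d matrix. Suppose the (d−1)×(d−1) submatrix (y_{i,j})_{2≤i,j≤d} equals [[c_r, 0],[k_r, 0]] · [[c_rᵀ, k_rᵀ],[0, 0]], where c_r is an invertible r×r real matrix and k_r is a (d−1−r)×r real matrix. Write y₁^r := (y_{1,i+1})_{1≤i≤r} ∈ ℝ^r and y₁^{r,d} := (y_{1,i+1})_{r+1≤i≤d−1} ∈ ℝ^{d−1−r}. Then y₁^{r,d} = k_r · c_r⁻¹ · y₁^r. -/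
open Matrix

theorem aux_opt {a b : Type*} [Fintype a] [Fintype b] [DecidableEq a] [DecidableEq b]
    (Y : Matrix (Option (a ⊕ b)) (Option (a ⊕ b)) ℝ) (hY : Y.PosSemidef)
    (c : Matrix a a ℝ) (hc : IsUnit c) (k : Matrix b a ℝ)
    (h : ∀ p q, Y (some p) (some q) =
      ((Matrix.fromBlocks c 0 k 0 : Matrix (a ⊕ b) (a ⊕ b) ℝ) *
        (Matrix.fromBlocks cᵀ kᵀ 0 0 : Matrix (a ⊕ b) (a ⊕ b) ℝ)) p q) (i : b) :
    Y none (some (Sum.inr i)) = ((k * c⁻¹).mulVec (fun j => Y none (some (Sum.inl j)))) i := by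
  set w : a ⊕ b → ℝ := Sum.elim (-((k * c⁻¹) i)) (Pi.single i 1) with hw
  have hdet : IsUnit c.det := (Matrix.isUnit_iff_isUnit_det c).1 hc
  have hB : (Matrix.fromBlocks cᵀ kᵀ 0 0 : Matrix (a ⊕ b) (a ⊕ b) ℝ) *ᵥ w = 0 := by
    rw [Matrix.fromBlocks_mulVec]
    have h1 : cᵀ *ᵥ ((k * c⁻¹) i) = k i := by
      rw [Matrix.mulVec_transpose, ← Matrix.mul_apply_eq_vecMul, Matrix.mul_assoc,
        Matrix.nonsing_inv_mul _ hdet, Matrix.mul_one]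
    have h2 : kᵀ *ᵥ (Pi.single i 1 : b → ℝ) = k i := by
      ext j; simp
    have e1 : w ∘ Sum.inl = -((k * c⁻¹) i) := rfl
    have e2 : w ∘ Sum.inr = Pi.single i 1 := rfl
    rw [e1, e2, Matrix.mulVec_neg, h1, h2]
    ext (j | j) <;> simp
  set z : Option (a ⊕ b) → ℝ := fun o => o.elim 0 w with hz
  have hs : ∀ p, (Y *ᵥ z) (some p) = 0 := by
    intro p
    have : (Y *ᵥ z) (some p) = (((Matrix.fromBlocks c 0 k 0 : Matrix (a ⊕ b) (a ⊕ b) ℝ) *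
        (Matrix.fromBlocks cᵀ kᵀ 0 0 : Matrix (a ⊕ b) (a ⊕ b) ℝ)) *ᵥ w) p := by
      simp only [Matrix.mulVec, dotProduct, Fintype.sum_option, hz, h]
      simp
    rw [this, ← Matrix.mulVec_mulVec, hB, Matrix.mulVec_zero]; rfl
  have h0 : star z ⬝ᵥ (Y *ᵥ z) = 0 := by
    simp only [dotProduct, Fintype.sum_option, hs]
    simp [hz]
  have h3 := congrFun ((hY.dotProduct_mulVec_zero_iff z).1 h0) none
  simp only [Matrix.mulVec, dotProduct, Fintype.sum_option, hz, hw, Fintype.sum_sum_type,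
    Option.elim, Sum.elim_inl, Sum.elim_inr, Pi.neg_apply, Pi.zero_apply, mul_neg,
    Finset.sum_neg_distrib, mul_zero, zero_add, Pi.single_apply, mul_ite, mul_one,
    Finset.sum_ite_eq', Finset.sum_ite_eq, Finset.mem_univ, if_true] at h3
  simp only [Matrix.mulVec, dotProduct]
  rw [Finset.sum_congr rfl (fun j _ => mul_comm ((k * c⁻¹) i j) _)]
  linarith

/-- Let `y` be symmetric positive semidefinite of size `d = n+1 ≥ 2`, and
suppose its lower-right `n×n` submatrix equals `[[c_r,0],[k_r,0]]·[[c_rᵀ,k_rᵀ],[0,0]]` with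
`c_r` invertible. Writing `y₁^r` and `y₁^{r,d}` for the first and last parts of the first row
(off-diagonal), we have `y₁^{r,d} = k_r c_r⁻¹ y₁^r`. -/
theorem stmt_13 (n : ℕ) (hn : 1 ≤ n) (r : ℕ) (hr : r ≤ n)
    (y : Matrix (Fin (n + 1)) (Fin (n + 1)) ℝ) (hy : y.PosSemidef)
    (c_r : Matrix (Fin r) (Fin r) ℝ) (hcr : IsUnit c_r)
    (k_r : Matrix (Fin (n - r)) (Fin r) ℝ)
    (hblock : y.submatrix Fin.succ Fin.succ =
      Matrix.reindex (finSumFinEquiv.trans (finCongr (Nat.add_sub_cancel' hr)))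
        (finSumFinEquiv.trans (finCongr (Nat.add_sub_cancel' hr)))
        (Matrix.fromBlocks c_r 0 k_r 0 * Matrix.fromBlocks c_rᵀ k_rᵀ 0 0)) :
    (fun i : Fin (n - r) =>
        y 0 (Fin.succ ((finSumFinEquiv.trans (finCongr (Nat.add_sub_cancel' hr))) (Sum.inr i)))) =
      (k_r * c_r⁻¹).mulVec
        (fun i : Fin r =>
          y 0 (Fin.succ ((finSumFinEquiv.trans (finCongr (Nat.add_sub_cancel' hr))) (Sum.inl i)))) := by
  have hY := hy.submatrix (fun o : Option (Fin r ⊕ Fin (n - r)) => o.elim 0 (fun p =>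
    Fin.succ ((finSumFinEquiv.trans (finCongr (Nat.add_sub_cancel' hr))) p)))
  have := aux_opt _ hY c_r hcr k_r (fun p q => by
    have := congrFun (congrFun hblock
      ((finSumFinEquiv.trans (finCongr (Nat.add_sub_cancel' hr))) p))
      ((finSumFinEquiv.trans (finCongr (Nat.add_sub_cancel' hr))) q)
    rw [Matrix.reindex_apply, Matrix.submatrix_apply, Matrix.submatrix_apply,
      Equiv.symm_apply_apply, Equiv.symm_apply_apply] at this
    exact this)
  funext i
  exact this i
end

section
/- Let d ≥ 2 and let x be a real symmetric positive semidefinite d×d matrix. Suppose the (d−1)×(d−1) submatrix (x_{i,j})_{2≤i,j≤d} equals c cᵀ where c = [[c_r, 0],[k_r, 0]] with c_r an invertible lower triangular r×r real matrix and k_r a (d−1−r)×r real matrix. Then x_{1,1} ≥ Σ_{k=1}^r ( Σ_{l=1}^r (c_r⁻¹)_{k,l} x_{1,l+1} )². -/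
open Matrix

/-- Let `x` be symmetric positive semidefinite of size `d = n+1 ≥ 2`, and
suppose its lower-right `n×n` submatrix equals `c cᵀ` with `c = [[c_r,0],[k_r,0]]`, `c_r`
invertible lower triangular. Then
`x_{1,1} ≥ Σ_{k=1}^r (Σ_{l=1}^r (c_r⁻¹)_{k,l} x_{1,l+1})²`. -/
theorem stmt_14 (n : ℕ) (hn : 1 ≤ n) (r : ℕ) (hr : r ≤ n)
    (x : Matrix (Fin (n + 1)) (Fin (n + 1)) ℝ) (hx : x.PosSemidef)
    (c_r : Matrix (Fin r) (Fin r) ℝ) (hcr : IsUnit c_r)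
    (hlow : ∀ i j : Fin r, i < j → c_r i j = 0)
    (k_r : Matrix (Fin (n - r)) (Fin r) ℝ)
    (hblock : x.submatrix Fin.succ Fin.succ =
      Matrix.reindex (finSumFinEquiv.trans (finCongr (Nat.add_sub_cancel' hr)))
        (finSumFinEquiv.trans (finCongr (Nat.add_sub_cancel' hr)))
        (Matrix.fromBlocks c_r 0 k_r 0 * (Matrix.fromBlocks c_r 0 k_r 0)ᵀ)) :
    ∑ k : Fin r,
        (∑ l : Fin r,
          c_r⁻¹ k l *
            x 0 (Fin.succ
              ((finSumFinEquiv.trans (finCongr (Nat.add_sub_cancel' hr))) (Sum.inl l)))) ^ 2 ≤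
      x 0 0 := by
  classical
  set e : Fin r → Fin (n + 1) := fun l => Fin.succ
    ((finSumFinEquiv.trans (finCongr (Nat.add_sub_cancel' hr))) (Sum.inl l)) with he
  have hD : ∀ i j, x (e i) (e j) = (c_r * c_rᵀ) i j := by
    intro i j
    have h := congrFun (congrFun hblock
      ((finSumFinEquiv.trans (finCongr (Nat.add_sub_cancel' hr))) (Sum.inl i)))
      ((finSumFinEquiv.trans (finCongr (Nat.add_sub_cancel' hr))) (Sum.inl j))
    rw [Matrix.submatrix_apply, Matrix.reindex_apply, Matrix.submatrix_apply,
      Equiv.symm_apply_apply, Equiv.symm_apply_apply, Matrix.fromBlocks_transpose,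
      Matrix.fromBlocks_multiply, Matrix.fromBlocks_apply₁₁] at h
    simpa [he] using h
  have hdet : IsUnit c_r.det := (Matrix.isUnit_iff_isUnit_det _).1 hcr
  have hPD : (c_r * c_rᵀ).PosDef := by
    have := Matrix.PosDef.mul_conjTranspose_self c_r
      (Matrix.vecMul_injective_iff_isUnit.2 hcr)
    simpa using this
  let B : Matrix Unit (Fin r) ℝ := Matrix.of fun _ l => x 0 (e l)
  let A : Matrix Unit Unit ℝ := Matrix.of fun _ _ => x 0 0
  have hsub : (Matrix.fromBlocks A B Bᴴ (c_r * c_rᵀ)).PosSemidef := by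
    have h := hx.submatrix (Sum.elim (fun _ : Unit => (0 : Fin (n + 1))) e)
    convert h using 1
    ext i j
    rcases i with i | i <;> rcases j with j | j
    · simp [A]
    · simp [B]
    · have := hx.isHermitian.apply (e i) 0
      simpa [B] using this
    · simp [hD]
  haveI : Invertible (c_r * c_rᵀ) := hPD.isUnit.invertible
  rw [Matrix.PosDef.fromBlocks₂₂ A B hPD] at hsub
  have h0 := hsub.diag_nonneg (i := ())
  have hB : B * (c_r * c_rᵀ)⁻¹ * Bᴴ = (c_r⁻¹ * Bᵀ)ᵀ * (c_r⁻¹ * Bᵀ) := by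
    rw [Matrix.mul_inv_rev, Matrix.transpose_mul, Matrix.transpose_transpose,
      Matrix.transpose_nonsing_inv, Matrix.conjTranspose_eq_transpose_of_trivial]
    simp only [Matrix.mul_assoc]
  rw [hB, Matrix.sub_apply, Matrix.mul_apply] at h0
  have h1 : ∀ k, (c_r⁻¹ * Bᵀ) k () = ∑ l, c_r⁻¹ k l * x 0 (e l) := fun k => rfl
  simp only [Matrix.transpose_apply (c_r⁻¹ * Bᵀ), h1, ← sq] at h0
  have h2 : A () () = x 0 0 := rfl
  rw [h2] at h0
  linarith
end

section
/- Let B be a linear endomorphism of the space S_d(ℝ) of real symmetric d×d matrices satisfying condition (★): for all positive semidefinite x₁, x₂ ∈ S_d(ℝ) with Tr(x₁x₂) = 0, one has Tr(B(x₁)x₂) ≥ 0. Let ᾱ and x be real symmetric positive semidefinite d×d matrices. Then for every t ≥ 0, the matrix exp(tB)(x) + ∫₀ᵗ exp(sB)(ᾱ) ds is positive semidefinite, where exp(tB) := Σ_{k=0}^∞ tᵏ Bᵏ / k! is the exponential of the endomorphism B. Equivalently, the unique solution of the linear ODE x'(t) = ᾱ + B(x(t)) with x(0) = x takes values in the positive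 semidefinite cone for all t ≥ 0. -/
open Matrix MeasureTheory

attribute [local instance] Matrix.normedAddCommGroup Matrix.normedSpace

lemma aux_exp {E : Type*} [NormedAddCommGroup E] [NormedSpace ℝ E] [FiniteDimensional ℝ E]
    (B : Module.End ℝ E) (x : E) :
    ∃ f : ℝ → E, (∀ t, HasSum (fun k : ℕ => (t ^ k / (Nat.factorial k) : ℝ) • (B ^ k) x) (f t)) ∧
      f 0 = x ∧ ∀ t, HasDerivAt f (B (f t)) t := by
  have : CompleteSpace E := FiniteDimensional.complete ℝ E
  let A : E →L[ℝ] E := LinearMap.toContinuousLinearMap B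
  have hA : ∀ (k : ℕ) (y : E), (A ^ k) y = (B ^ k) y := by
    intro k
    induction k with
    | zero => intro y; simp
    | succ n ih => intro y; rw [pow_succ, pow_succ]; simp [ih, A]
  refine ⟨fun t => NormedSpace.exp (t • A) x, ?_, ?_, ?_⟩
  · intro t
    have h := NormedSpace.exp_series_hasSum_exp' (𝕂 := ℝ) (t • A)
    have h2 := (ContinuousLinearMap.apply ℝ E x).hasSum h
    have e : (fun k : ℕ => (t ^ k / (Nat.factorial k) : ℝ) • (B ^ k) x) =
        fun k : ℕ => (ContinuousLinearMap.apply ℝ E x)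
          (((Nat.factorial k : ℝ))⁻¹ • (t • A) ^ k) := by
      funext k
      simp [smul_pow, hA, smul_smul, div_eq_inv_mul]
    rw [e]
    exact h2
  · simp
  · intro t
    have h := hasDerivAt_exp_smul_const' (𝕂 := ℝ) A t
    have h2 := (ContinuousLinearMap.apply ℝ E x).hasFDerivAt.comp_hasDerivAt t h
    exact h2

lemma aux_int_s15 {E : Type*} [NormedAddCommGroup E] [NormedSpace ℝ E] [FiniteDimensional ℝ E]
    (g : ℝ → E) (hg : Continuous g) (t : ℝ) (L : E →ₗ[ℝ] ℝ) :
    L (∫ s in (0:ℝ)..t, g s) = ∫ s in (0:ℝ)..t, L (g s) := by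
  have : CompleteSpace E := FiniteDimensional.complete ℝ E
  exact ((LinearMap.toContinuousLinearMap L).intervalIntegral_comp_comm
    (hg.intervalIntegrable _ _)).symm

lemma aux_symm_s15 {d : ℕ} (B : Module.End ℝ (Matrix (Fin d) (Fin d) ℝ))
    (hBsymm : ∀ x : Matrix (Fin d) (Fin d) ℝ, x.IsSymm → (B x).IsSymm)
    (x : Matrix (Fin d) (Fin d) ℝ) (hx : x.IsSymm) (k : ℕ) : ((B ^ k) x).IsSymm := by
  induction k with
  | zero => simpa using hx
  | succ n ih => rw [pow_succ']; exact hBsymm _ ih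

lemma aux_quad {d : ℕ} (M : Matrix (Fin d) (Fin d) ℝ) (v : Fin d → ℝ) :
    (M * vecMulVec v v).trace = v ⬝ᵥ (M *ᵥ v) := by
  rw [Matrix.mul_vecMulVec, Matrix.trace_vecMulVec, dotProduct_comm]

lemma aux_flow {d : ℕ} (B : Module.End ℝ (Matrix (Fin d) (Fin d) ℝ))
    (hstar : ∀ x₁ x₂ : Matrix (Fin d) (Fin d) ℝ, x₁.PosSemidef → x₂.PosSemidef →
      (x₁ * x₂).trace = 0 → 0 ≤ (B x₁ * x₂).trace)
    (f : ℝ → Matrix (Fin d) (Fin d) ℝ) (hf0 : (f 0).PosSemidef)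
    (hs : ∀ t, (f t).IsSymm) (hd : ∀ t, HasDerivAt f (B (f t)) t)
    (T : ℝ) (hT : 0 ≤ T) : (f T).PosSemidef := by
  have hfc : Continuous f := continuous_iff_continuousAt.2 fun t => (hd t).continuousAt
  have hpos : ∀ v : Fin d → ℝ, v ≠ 0 → 0 < v ⬝ᵥ v := fun v hv => by
    have := (Matrix.dotProduct_star_self_pos_iff (v := v)).2 hv
    simpa using this
  have hSc : IsCompact (Metric.sphere (0 : Fin d → ℝ) 1) := isCompact_sphere _ _
  have hSne : ∀ v ∈ Metric.sphere (0 : Fin d → ℝ) 1, v ≠ 0 := fun v hv =>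
    ne_zero_of_mem_unit_sphere ⟨v, hv⟩
  obtain ⟨K, hK⟩ : ∃ K : ℝ, ∀ v ∈ Metric.sphere (0 : Fin d → ℝ) 1,
      v ⬝ᵥ (B 1 *ᵥ v) < K * (v ⬝ᵥ v) := by
    have hc : ContinuousOn (fun v : Fin d → ℝ => (v ⬝ᵥ (B 1 *ᵥ v)) / (v ⬝ᵥ v))
        (Metric.sphere (0 : Fin d → ℝ) 1) := by
      apply ContinuousOn.div
      · exact (Continuous.dotProduct continuous_id
          (Continuous.matrix_mulVec continuous_const continuous_id)).continuousOn
      · exact (Continuous.dotProduct continuous_id continuous_id).continuousOn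
      · exact fun v hv => (hpos v (hSne v hv)).ne'
    obtain ⟨C, hC⟩ := hSc.bddAbove_image hc
    refine ⟨C + 1, fun v hv => ?_⟩
    have h1 := hC (Set.mem_image_of_mem _ hv)
    have h2 := hpos v (hSne v hv)
    rw [div_le_iff₀ h2] at h1
    linarith
  -- perturbed positivity
  have key : ∀ ε : ℝ, 0 < ε → ∀ t, 0 ≤ t → ∀ v ∈ Metric.sphere (0 : Fin d → ℝ) 1,
      0 < v ⬝ᵥ (f t *ᵥ v) + ε * Real.exp (K * t) * (v ⬝ᵥ v) := by
    intro ε hε t ht v hv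
    by_contra hcon
    let q : ℝ × (Fin d → ℝ) → ℝ := fun p =>
      p.2 ⬝ᵥ (f p.1 *ᵥ p.2) + ε * Real.exp (K * p.1) * (p.2 ⬝ᵥ p.2)
    have hq : Continuous q := by
      apply Continuous.add
      · exact Continuous.dotProduct continuous_snd
          (Continuous.matrix_mulVec (hfc.comp continuous_fst) continuous_snd)
      · exact Continuous.mul (by fun_prop) (Continuous.dotProduct continuous_snd continuous_snd)
    have hcomp : IsCompact ((Set.Icc 0 t ×ˢ Metric.sphere (0 : Fin d → ℝ) 1) ∩ {p | q p ≤ 0}) :=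
      (isCompact_Icc.prod hSc).inter_right (isClosed_le hq continuous_const)
    obtain ⟨⟨t0, w⟩, ⟨⟨ht0, hw⟩, hqw⟩, hmin⟩ := hcomp.exists_isMinOn
      ⟨(t, v), ⟨⟨ht, le_rfl⟩, hv⟩, not_lt.1 hcon⟩ continuous_fst.continuousOn
    simp only [Set.mem_ofPred_eq] at ht0 hw hqw
    have hbefore : ∀ s, 0 ≤ s → s < t0 → ∀ u ∈ Metric.sphere (0 : Fin d → ℝ) 1, 0 < q (s, u) := by
      intro s hs0 hst u hu
      by_contra hc
      have := hmin (show (s, u) ∈ _ from ⟨⟨⟨hs0, hst.le.trans ht0.2⟩, hu⟩, not_lt.1 hc⟩)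
      simp only [Set.mem_ofPred_eq] at this
      linarith
    have hww := hpos w (hSne w hw)
    have ht0pos : 0 < t0 := by
      rcases ht0.1.lt_or_eq with h | h
      · exact h
      · exfalso
        change (0:ℝ) = t0 at h
        subst h
        have h1 := hf0.dotProduct_mulVec_nonneg w
        simp only [star_trivial] at h1
        have h2 : 0 < ε * (w ⬝ᵥ w) := by positivity
        simp [q] at hqw
        linarith
    have hat : ∀ u ∈ Metric.sphere (0 : Fin d → ℝ) 1, 0 ≤ q (t0, u) := by
      intro u hu
      have hcl : t0 ∈ closure (Set.Ioo 0 t0) := by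
        rw [closure_Ioo ht0pos.ne]; exact ⟨ht0pos.le, le_rfl⟩
      have hclosed : IsClosed {s : ℝ | 0 ≤ q (s, u)} :=
        isClosed_le continuous_const (by fun_prop)
      exact closure_minimal (fun s hs => (hbefore s hs.1.le hs.2 u hu).le) hclosed hcl
    have hq0 : q (t0, w) = 0 := le_antisymm hqw (hat w hw)
    let c : ℝ := ε * Real.exp (K * t0)
    have hc : 0 < c := by positivity
    let z : Matrix (Fin d) (Fin d) ℝ := f t0 + c • 1
    have hzq : ∀ u, u ⬝ᵥ (z *ᵥ u) = q (t0, u) := by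
      intro u
      simp [z, q, c, Matrix.add_mulVec, Matrix.smul_mulVec]
    have hz : z.PosSemidef := by
      apply Matrix.PosSemidef.of_dotProduct_mulVec_nonneg
      · have : z.IsSymm := (hs t0).add (Matrix.isSymm_one.smul c)
        exact (Matrix.conjTranspose_eq_transpose_of_trivial z).trans this.eq
      · intro u
        simp only [star_trivial]
        rcases eq_or_ne u 0 with rfl | hu
        · simp
        · have hn : 0 < ‖u‖ := norm_pos_iff.2 hu
          have h1 := hat (‖u‖⁻¹ • u) (by simp [norm_smul, hn.ne'])
          rw [← hzq] at h1
          simp only [Matrix.mulVec_smul, dotProduct_smul, smul_dotProduct, smul_eq_mul] at h1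
          have hi : 0 < ‖u‖⁻¹ := inv_pos.2 hn
          exact nonneg_of_mul_nonneg_right (nonneg_of_mul_nonneg_right h1 hi) hi
    have hw2 : (vecMulVec w w).PosSemidef := by
      simpa using Matrix.posSemidef_vecMulVec_self_star w
    have h0 := hstar z _ hz hw2 (by rw [aux_quad, hzq, hq0])
    rw [aux_quad] at h0
    have hBz : w ⬝ᵥ (B z *ᵥ w) = w ⬝ᵥ (B (f t0) *ᵥ w) + c * (w ⬝ᵥ (B 1 *ᵥ w)) := by
      simp [z, Matrix.add_mulVec, Matrix.smul_mulVec]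
    rw [hBz] at h0
    let L : Matrix (Fin d) (Fin d) ℝ →ₗ[ℝ] ℝ :=
      { toFun := fun M => w ⬝ᵥ (M *ᵥ w)
        map_add' := by intro M N; simp [Matrix.add_mulVec]
        map_smul' := by intro r M; simp [Matrix.smul_mulVec] }
    have hL := (LinearMap.toContinuousLinearMap L).hasFDerivAt.comp_hasDerivAt t0 (hd t0)
    have hE : HasDerivAt (fun s => ε * Real.exp (K * s) * (w ⬝ᵥ w))
        (ε * (Real.exp (K * t0) * (K * 1)) * (w ⬝ᵥ w)) t0 :=
      ((((hasDerivAt_id t0).const_mul K).exp).const_mul ε).mul_const _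
    have hder : HasDerivAt (fun s => q (s, w))
        (w ⬝ᵥ (B (f t0) *ᵥ w) + ε * (Real.exp (K * t0) * (K * 1)) * (w ⬝ᵥ w)) t0 := hL.add hE
    have hDpos : 0 < w ⬝ᵥ (B (f t0) *ᵥ w) + ε * (Real.exp (K * t0) * (K * 1)) * (w ⬝ᵥ w) := by
      have := mul_lt_mul_of_pos_left (hK w hw) hc
      have e : ε * (Real.exp (K * t0) * (K * 1)) * (w ⬝ᵥ w) = c * (K * (w ⬝ᵥ w)) := by
        simp only [c]; ring
      rw [e]; linarith
    have hsl := (hasDerivAt_iff_tendsto_slope.1 hder).eventually (lt_mem_nhds hDpos)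
    have hsl' : ∀ᶠ s in nhdsWithin t0 (Set.Iio t0), 0 < slope (fun s => q (s, w)) t0 s :=
      hsl.filter_mono (nhdsWithin_mono _ (fun s hs => ne_of_lt hs))
    have hev : ∀ᶠ s in nhdsWithin t0 (Set.Iio t0), s ∈ Set.Ioo 0 t0 :=
      Ioo_mem_nhdsLT ht0pos
    obtain ⟨s, hs1, hs2⟩ := (hsl'.and hev).exists
    rw [slope_def_field, hq0, sub_zero] at hs1
    have := div_neg_of_pos_of_neg (hbefore s hs2.1.le hs2.2 w hw) (sub_neg.2 hs2.2)
    linarith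
  apply Matrix.PosSemidef.of_dotProduct_mulVec_nonneg
  · exact (Matrix.conjTranspose_eq_transpose_of_trivial _).trans (hs T).eq
  · intro u
    simp only [star_trivial]
    rcases eq_or_ne u 0 with rfl | hu
    · simp
    · have hn : 0 < ‖u‖ := norm_pos_iff.2 hu
      have hm : ‖u‖⁻¹ • u ∈ Metric.sphere (0 : Fin d → ℝ) 1 := by simp [norm_smul, hn.ne']
      have h1 : 0 ≤ (‖u‖⁻¹ • u) ⬝ᵥ (f T *ᵥ (‖u‖⁻¹ • u)) := by
        have hp := hpos _ (hSne _ hm)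
        refine le_of_forall_pos_le_add fun δ hδ => ?_
        have := key (δ / (Real.exp (K * T) * ((‖u‖⁻¹ • u) ⬝ᵥ (‖u‖⁻¹ • u)))) (by positivity)
          T hT _ hm
        have e : δ / (Real.exp (K * T) * ((‖u‖⁻¹ • u) ⬝ᵥ (‖u‖⁻¹ • u))) * Real.exp (K * T) *
          ((‖u‖⁻¹ • u) ⬝ᵥ (‖u‖⁻¹ • u)) = δ := by
          have := (Real.exp_pos (K * T)).ne'
          have := hp.ne'
          rw [mul_assoc, div_mul_cancel₀]
          positivity
        rw [e] at this
        exact this.le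
      simp only [Matrix.mulVec_smul, dotProduct_smul, smul_dotProduct, smul_eq_mul] at h1
      have hi : 0 < ‖u‖⁻¹ := inv_pos.2 hn
      exact nonneg_of_mul_nonneg_right (nonneg_of_mul_nonneg_right h1 hi) hi

lemma aux_main_s15 {d : ℕ} (B : Module.End ℝ (Matrix (Fin d) (Fin d) ℝ))
    (hBsymm : ∀ x : Matrix (Fin d) (Fin d) ℝ, x.IsSymm → (B x).IsSymm)
    (hstar : ∀ x₁ x₂ : Matrix (Fin d) (Fin d) ℝ, x₁.PosSemidef → x₂.PosSemidef →
      (x₁ * x₂).trace = 0 → 0 ≤ (B x₁ * x₂).trace)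
    (x : Matrix (Fin d) (Fin d) ℝ) (hx : x.PosSemidef) :
    ∃ f : ℝ → Matrix (Fin d) (Fin d) ℝ,
      (∀ t : ℝ, (∑' k : ℕ, (t ^ k / (Nat.factorial k) : ℝ) • (B ^ k) x) = f t) ∧
      Continuous f ∧ ∀ t, 0 ≤ t → (f t).PosSemidef := by
  obtain ⟨f, h1, h2, h3⟩ := aux_exp B x
  have hxs : x.IsSymm := 
    (Matrix.conjTranspose_eq_transpose_of_trivial x).symm.trans hx.isHermitian.eq
  refine ⟨f, fun t => (h1 t).tsum_eq,
    continuous_iff_continuousAt.2 fun t => (h3 t).continuousAt,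
    aux_flow B hstar f (h2 ▸ hx) (fun t => ?_) h3⟩
  have := (h1 t).matrix_transpose
  have e : (fun k : ℕ => ((t ^ k / (Nat.factorial k) : ℝ) • (B ^ k) x)ᵀ) =
      fun k : ℕ => (t ^ k / (Nat.factorial k) : ℝ) • (B ^ k) x := by
    funext k
    rw [Matrix.transpose_smul, (aux_symm_s15 B hBsymm x hxs k).eq]
  rw [e] at this
  exact this.unique (h1 t)

/-- Let `B` be a linear endomorphism of the symmetric `d×d` matrices
satisfying condition (★). Then for `ᾱ, x` positive semidefinite and `t ≥ 0`, the matrix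
`exp(tB)(x) + ∫₀ᵗ exp(sB)(ᾱ) ds` is positive semidefinite, where
`exp(tB) = Σ_k tᵏ Bᵏ / k!`; equivalently, the solution of `x'(t) = ᾱ + B(x(t))`, `x(0)=x`
stays in the positive semidefinite cone. -/
theorem stmt_15 (d : ℕ) (B : Module.End ℝ (Matrix (Fin d) (Fin d) ℝ))
    (hBsymm : ∀ x : Matrix (Fin d) (Fin d) ℝ, x.IsSymm → (B x).IsSymm)
    (hstar : ∀ x₁ x₂ : Matrix (Fin d) (Fin d) ℝ, x₁.PosSemidef → x₂.PosSemidef →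
      (x₁ * x₂).trace = 0 → 0 ≤ (B x₁ * x₂).trace)
    (α x : Matrix (Fin d) (Fin d) ℝ) (hα : α.PosSemidef) (hx : x.PosSemidef)
    (t : ℝ) (ht : 0 ≤ t) :
    Matrix.PosSemidef
      ((∑' k : ℕ, (t ^ k / (Nat.factorial k) : ℝ) • (B ^ k) x) +
        ∫ s in (0:ℝ)..t, ∑' k : ℕ, (s ^ k / (Nat.factorial k) : ℝ) • (B ^ k) α) := by
  obtain ⟨f, hf, -, hfp⟩ := aux_main_s15 B hBsymm hstar x hx
  obtain ⟨g, hg, hgc, hgp⟩ := aux_main_s15 B hBsymm hstar α hα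
  simp only [hf, hg]
  refine (hfp t ht).add ?_
  have hcomm : ∀ L : Matrix (Fin d) (Fin d) ℝ →ₗ[ℝ] ℝ,
      L (∫ s in (0:ℝ)..t, g s) = ∫ s in (0:ℝ)..t, L (g s) := fun L =>
    aux_int_s15 g hgc t L
  apply Matrix.PosSemidef.of_dotProduct_mulVec_nonneg
  · ext i j
    simp only [Matrix.conjTranspose_apply, star_trivial]
    have h1 := hcomm (Matrix.entryLinearMap ℝ ℝ i j)
    have h2 := hcomm (Matrix.entryLinearMap ℝ ℝ j i)
    simp only [Matrix.entryLinearMap_apply] at h1 h2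
    rw [h1, h2]
    apply intervalIntegral.integral_congr
    intro s hs
    rw [Set.uIcc_of_le ht] at hs
    simpa using (hgp s hs.1).isHermitian.apply i j
  · intro w
    simp only [star_trivial]
    let L : Matrix (Fin d) (Fin d) ℝ →ₗ[ℝ] ℝ :=
      { toFun := fun M => w ⬝ᵥ (M *ᵥ w)
        map_add' := by intro M N; simp [Matrix.add_mulVec]
        map_smul' := by intro r M; simp [Matrix.smul_mulVec] }
    have h := hcomm L
    change 0 ≤ L _
    rw [h]
    apply intervalIntegral.integral_nonneg ht
    intro s hs
    exact (hgp s hs.1).dotProduct_mulVec_nonneg w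
end
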